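/- Let m ≥ 3 be an integer. If δ > 0 is sufficiently small, then for any map u ∈ Σ_m with E(u) ≤ 4πm + δ² there exist s > 0, α ∈ ℝ, and a function z : (0,∞) → ℂ such that u(r,θ) = e^{(mθ+α)R}[ (1 + γ(r/s)) h(r/s) + V^{r/s}(z(r/s)) ], where γ := (1 − |z|²)^{1/2} − 1, such that z satisfies the orthogonality condition ∫₀^∞ z(ρ) h₁(ρ) ρ dρ = 0, and ‖z‖_X² ≤ C (E(u) − 4πm) for a constant C depending only on m. -/

import Mathlib

open MeasureTheory Set Real Filter
open scoped ENNReal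

noncomputable section

abbrev V3 := Fin 3 → ℝ
abbrev V2 := Fin 2 → ℝ

/-- cross product in ℝ³ -/
def cross3 (a b : V3) : V3 :=
  ![a 1 * b 2 - a 2 * b 1, a 2 * b 0 - a 0 * b 2, a 0 * b 1 - a 1 * b 0]

/-- dot product in ℝ³ -/
def dot3 (a b : V3) : ℝ := a 0 * b 0 + a 1 * b 1 + a 2 * b 2

/-- squared euclidean norm in ℝ³ -/
def nsq3 (a : V3) : ℝ := a 0 ^ 2 + a 1 ^ 2 + a 2 ^ 2

/-- the generator R of rotations about the x₃-axis -/
def Rv (a : V3) : V3 := ![-a 1, a 0, 0]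

/-- the rotation e^{αR} about the x₃-axis -/
def rotZ (α : ℝ) (a : V3) : V3 :=
  ![Real.cos α * a 0 - Real.sin α * a 1, Real.sin α * a 0 + Real.cos α * a 1, a 2]

def kHat : V3 := ![0, 0, 1]
def negkHat : V3 := ![0, 0, -1]
def jHat : V3 := ![0, 1, 0]

/-- first component of the harmonic map profile -/
def h1f (m : ℕ) (r : ℝ) : ℝ := 2 / (r ^ (m : ℤ) + r ^ (-(m : ℤ)))

/-- third component of the harmonic map profile -/
def h3f (m : ℕ) (r : ℝ) : ℝ := (r ^ (m : ℤ) - r ^ (-(m : ℤ))) / (r ^ (m : ℤ) + r ^ (-(m : ℤ)))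

/-- the harmonic map profile h -/
def hProf (m : ℕ) (r : ℝ) : V3 := ![h1f m r, 0, h3f m r]

/-- the r-derivative of the harmonic map profile -/
def dhProf (m : ℕ) (r : ℝ) : V3 :=
  ![-((m : ℝ) / r) * h1f m r * h3f m r, 0, ((m : ℝ) / r) * (h1f m r) ^ 2]

/-- profile of the harmonic map e^{(mθ+α)R} h(r/s) -/
def harmP (m : ℕ) (s α : ℝ) (r : ℝ) : V3 := rotZ α (hProf m (r / s))

/-- its r-derivative -/
def dharmP (m : ℕ) (s α : ℝ) (r : ℝ) : V3 := fun i => (1 / s) * rotZ α (dhProf m (r / s)) i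

/-- `v` is locally absolutely continuous on (0,∞), with a.e. derivative `dv`. -/
def LocAC (v dv : ℝ → V3) : Prop :=
  (∀ a b : ℝ, 0 < a → a ≤ b → ∀ i, IntervalIntegrable (fun r => dv r i) volume a b) ∧
  (∀ a b : ℝ, 0 < a → a ≤ b → ∀ i, v b i - v a i = ∫ r in a..b, dv r i)

/-- energy density (w.r.t. dr) of the m-equivariant map with profile (v,dv) -/
def eDen (m : ℕ) (v dv : ℝ → V3) (r : ℝ) : ℝ :=
  (nsq3 (dv r) + ((m : ℝ) ^ 2 / r ^ 2) * ((v r 0) ^ 2 + (v r 1) ^ 2)) * r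

/-- the energy E(u) = (1/2)∫|∇u|² of the m-equivariant map with profile (v,dv) -/
def energy (m : ℕ) (v dv : ℝ → V3) : ℝ := π * ∫ r in Ioi (0:ℝ), eDen m v dv r

/-- membership in the class Σ_m, expressed in terms of the profile (v,dv) -/
def InSigma (m : ℕ) (v dv : ℝ → V3) : Prop :=
  LocAC v dv ∧ (∀ r ∈ Ioi (0:ℝ), nsq3 (v r) = 1) ∧
  IntegrableOn (eDen m v dv) (Ioi (0:ℝ)) ∧
  Tendsto v (nhdsWithin 0 (Ioi 0)) (nhds negkHat) ∧
  Tendsto v atTop (nhds kHat)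

/-- squared Ḣ¹(ℝ²) distance between the m-equivariant maps with profiles (v,dv), (w,dw) -/
def dH1sq (m : ℕ) (v dv w dw : ℝ → V3) : ℝ :=
  2 * π * ∫ r in Ioi (0:ℝ),
    (nsq3 (fun i => dv r i - dw r i)
      + ((m : ℝ) ^ 2 / r ^ 2) * ((v r 0 - w r 0) ^ 2 + (v r 1 - w r 1) ^ 2)) * r

/-- Ḣ¹(ℝ²) distance -/
def dH1 (m : ℕ) (v dv w dw : ℝ → V3) : ℝ := Real.sqrt (dH1sq m v dv w dw)

/-- the polar angle of a point of ℝ² -/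
def angleOf (x : V2) : ℝ := Complex.arg ⟨x 0, x 1⟩

/-- the radius of a point of ℝ² -/
def radOf (x : V2) : ℝ := Real.sqrt ((x 0) ^ 2 + (x 1) ^ 2)

/-- the m-equivariant map u(r,θ) = e^{mθR} v(r) -/
def eqMap (m : ℕ) (v : ℝ → V3) (x : V2) : V3 := rotZ ((m : ℝ) * angleOf x) (v (radOf x))

/-- the spatial gradient ∂_j u of the m-equivariant map with profile (v,dv) -/
def eqGrad (m : ℕ) (v dv : ℝ → V3) (x : V2) (j : Fin 2) : V3 :=
  rotZ ((m : ℝ) * angleOf x) (fun i =>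
    (x j / radOf x) * dv (radOf x) i
      + ((m : ℝ) * (if j = 0 then -(x 1) else x 0) / radOf x ^ 2) * Rv (v (radOf x)) i)

/-- weak (distributional) form of the Schrödinger map equation ∂ₜu = u × Δu on the time
interval I, for the m-equivariant map with time-dependent profile (v,dv):
∫∫ { u·φ_t - Σ_j (u × ∂_j u)·∂_j φ } dx dt = 0 for all C¹ compactly supported φ. -/
def WeakSM (m : ℕ) (I : Set ℝ) (v dv : ℝ → ℝ → V3) : Prop :=
  ∀ φ : ℝ → V2 → V3,
    (∀ i, ContDiff ℝ 1 (fun q : ℝ × V2 => φ q.1 q.2 i)) →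
    (∀ i, HasCompactSupport (fun q : ℝ × V2 => φ q.1 q.2 i)) →
    (∀ t, t ∉ interior I → ∀ x, φ t x = 0) →
    (∫ t in I, ∫ x : V2,
      (dot3 (eqMap m (v t) x) (fun i => deriv (fun τ => φ τ x i) t)
        - ∑ j : Fin 2, dot3 (cross3 (eqMap m (v t) x) (eqGrad m (v t) (dv t) x j))
            (fun i => fderiv ℝ (fun y => φ t y i) x (Pi.single j 1)))) = 0

/-- continuity in t of the map t ↦ u(t) with respect to the Ḣ¹ distance, on I -/
def H1Cont (m : ℕ) (I : Set ℝ) (v dv : ℝ → ℝ → V3) : Prop :=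
  ∀ t₀ ∈ I, ∀ ε > (0:ℝ), ∃ η > (0:ℝ), ∀ t ∈ I, |t - t₀| < η →
    dH1 m (v t) (dv t) (v t₀) (dv t₀) < ε

/-- a weak solution of the Schrödinger map equation in the class C(I; Σ_m), with
initial profile v₀ -/
def SolClass (m : ℕ) (I : Set ℝ) (v dv : ℝ → ℝ → V3) (v₀ : ℝ → V3) : Prop :=
  (∀ r ∈ Ioi (0:ℝ), v 0 r = v₀ r) ∧ WeakSM m I v dv ∧
  (∀ t ∈ I, InSigma m (v t) (dv t)) ∧ H1Cont m I v dv

/-- the profile of Δu for the m-equivariant map u with profile (v,dv,ddv):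
Δu = e^{mθR}( v_rr + v_r/r + (m²/r²) R² v ) -/
def lapP (m : ℕ) (v dv ddv : ℝ → V3) (r : ℝ) : V3 := fun i =>
  ddv r i + dv r i / r + ((m : ℝ) ^ 2 / r ^ 2) * (![-(v r 0), -(v r 1), 0] : V3) i

/-- squared Ḣ² distance (via the Laplacian) -/
def dH2sq (m : ℕ) (v dv ddv w dw ddw : ℝ → V3) : ℝ :=
  2 * π * ∫ r in Ioi (0:ℝ), nsq3 (fun i => lapP m v dv ddv r i - lapP m w dw ddw r i) * r


/-- `z` is locally absolutely continuous on (0,∞), with a.e. derivative `dz`. -/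
def LocACC (z dz : ℝ → ℂ) : Prop :=
  (∀ a b : ℝ, 0 < a → a ≤ b → IntervalIntegrable dz volume a b) ∧
  (∀ a b : ℝ, 0 < a → a ≤ b → z b - z a = ∫ ρ in a..b, dz ρ)

/-- the density (w.r.t. dρ) of the squared X-norm: (|z'|² + |z|²/ρ²) ρ -/
def xDen (z dz : ℝ → ℂ) (ρ : ℝ) : ℝ := (‖dz ρ‖ ^ 2 + ‖z ρ‖ ^ 2 / ρ ^ 2) * ρ

/-- the X-norm ‖z‖_X = (∫ (|z'|² + |z|²/ρ²) ρ dρ)^{1/2} -/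
def normX (z dz : ℝ → ℂ) : ℝ := Real.sqrt (∫ ρ in Ioi (0:ℝ), xDen z dz ρ)

/-- the operator L₀ = ∂_ρ + (m/ρ) h₃(ρ) -/
def L0op (m : ℕ) (z dz : ℝ → ℂ) (ρ : ℝ) : ℂ :=
  dz ρ + ((((m : ℝ) / ρ) * h3f m ρ : ℝ) : ℂ) * z ρ

/-- γ = (1 − |z|²)^{1/2} − 1 -/
def gamC (z : ℝ → ℂ) (ρ : ℝ) : ℝ := Real.sqrt (1 - ‖z ρ‖ ^ 2) - 1

/-- the tangent vector V^ρ(z) = z₁ ĵ + z₂ (h(ρ) × ĵ), h(ρ) × ĵ = (−h₃, 0, h₁) -/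
def Vrho (m : ℕ) (z : ℂ) (ρ : ℝ) : V3 :=
  fun i => z.re * jHat i + z.im * (![-(h3f m ρ), 0, h1f m ρ] : V3) i

/-- `f` is locally absolutely continuous on `(0,∞)`, with a.e. derivative `f'`. -/
def IsLocAC (f f' : ℝ → ℝ) : Prop :=
  ∀ a b : ℝ, 0 < a → a ≤ b → IntervalIntegrable f' volume a b ∧ f b - f a = ∫ r in a..b, f' r

namespace IsLocAC

variable {f g f' g' : ℝ → ℝ}

theorem intervalIntegrable (hf : IsLocAC f f') {a b : ℝ} (ha : 0 < a) (hab : a ≤ b) :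
    IntervalIntegrable f' volume a b := (hf a b ha hab).1

theorem integral_eq (hf : IsLocAC f f') {a b : ℝ} (ha : 0 < a) (hab : a ≤ b) :
    ∫ r in a..b, f' r = f b - f a := (hf a b ha hab).2.symm

theorem absolutelyContinuousOnInterval (hf : IsLocAC f f') {a b : ℝ} (ha : 0 < a) (hab : a ≤ b) :
    AbsolutelyContinuousOnInterval f a b := by
  have h1 : AbsolutelyContinuousOnInterval (fun x => ∫ r in a..x, f' r) a b :=
    (hf.intervalIntegrable ha hab).absolutelyContinuousOnInterval_intervalIntegral left_mem_uIcc
  have h2 : AbsolutelyContinuousOnInterval (fun _ : ℝ => f a) a b :=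
    ((LipschitzWith.const (f a)).lipschitzOnWith (s := uIcc a b)).absolutelyContinuousOnInterval
  have h3 := h1.add h2
  rw [absolutelyContinuousOnInterval_iff] at h3 ⊢
  intro ε hε
  obtain ⟨δ, hδ, h⟩ := h3 ε hε
  refine ⟨δ, hδ, fun E hE hlt => ?_⟩
  have h4 := h E hE hlt
  have key : ∀ x ∈ uIcc a b, f x = ((fun x => ∫ r in a..x, f' r) + fun _ : ℝ => f a) x := by
    intro x hx
    rw [uIcc_of_le hab] at hx
    simp [hf.integral_eq ha hx.1]
  refine lt_of_eq_of_lt (Finset.sum_congr rfl fun i hi => ?_) h4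
  rw [key _ (hE.1 i hi).1, key _ (hE.1 i hi).2]

theorem continuousOn (hf : IsLocAC f f') : ContinuousOn f (Ioi 0) := by
  intro x hx
  have hx0 : (0:ℝ) < x := hx
  have h := (hf.absolutelyContinuousOnInterval (half_pos hx0)
    (by linarith : x / 2 ≤ 2 * x)).continuousOn
  rw [uIcc_of_le (by linarith)] at h
  exact (h.continuousAt (Icc_mem_nhds (by linarith) (by linarith))).continuousWithinAt

theorem ae_hasDerivAt (hf : IsLocAC f f') :
    ∀ᵐ x ∂(volume.restrict (Ioi (0:ℝ))), HasDerivAt f (f' x) x := by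
  have h : ∀ n : ℕ, ∀ᵐ x, x ∈ Ioo (1 / ((n:ℝ) + 1)) ((n:ℝ) + 1) → HasDerivAt f (f' x) x := by
    intro n
    have hn : (0:ℝ) < 1 / ((n:ℝ) + 1) := by positivity
    have hle : 1 / ((n:ℝ) + 1) ≤ (n:ℝ) + 1 := by
      rw [div_le_iff₀ (by positivity)]; nlinarith [(n.cast_nonneg : (0:ℝ) ≤ n)]
    filter_upwards [(hf.intervalIntegrable hn hle).ae_hasDerivAt_integral] with x hx hxm
    have h1 := hx (by rw [uIcc_of_le hle]; exact Ioo_subset_Icc_self hxm) _ left_mem_uIcc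
    have h2 : HasDerivAt (fun y => (∫ t in (1 / ((n:ℝ) + 1))..y, f' t) + f (1 / ((n:ℝ) + 1)))
        (f' x) x := h1.add_const _
    refine h2.congr_of_eventuallyEq ?_
    filter_upwards [Ioo_mem_nhds hxm.1 hxm.2] with y hy
    rw [hf.integral_eq hn hy.1.le]; ring
  rw [ae_restrict_iff' measurableSet_Ioi]
  filter_upwards [ae_all_iff.2 h] with x hx hx0
  have hx0 : (0:ℝ) < x := hx0
  obtain ⟨n, hn⟩ := exists_nat_gt (max x (1 / x))
  refine hx n ⟨?_, ?_⟩
  · have : 1 / x < (n:ℝ) + 1 := by linarith [le_max_right x (1 / x)]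
    rw [div_lt_iff₀ hx0] at this
    rw [div_lt_iff₀ (by positivity)]; linarith
  · linarith [le_max_left x (1 / x)]

theorem of_ae_hasDerivAt
    (h : ∀ a b : ℝ, 0 < a → a ≤ b → AbsolutelyContinuousOnInterval f a b)
    (hd : ∀ᵐ x ∂(volume.restrict (Ioi (0:ℝ))), HasDerivAt f (f' x) x) : IsLocAC f f' := by
  intro a b ha hab
  have hac := h a b ha hab
  have hsub : Ioc a b ⊆ Ioi 0 := fun x hx => ha.trans hx.1
  have heq : deriv f =ᵐ[volume.restrict (uIoc a b)] f' := by
    rw [uIoc_of_le hab]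
    filter_upwards [ae_restrict_of_ae_restrict_of_subset hsub hd] with x hx using hx.deriv
  refine ⟨hac.intervalIntegrable_deriv.congr_ae heq, ?_⟩
  rw [← hac.integral_deriv_eq_sub]
  exact intervalIntegral.integral_congr_ae_restrict heq

theorem add (hf : IsLocAC f f') (hg : IsLocAC g g') :
    IsLocAC (fun r => f r + g r) (fun r => f' r + g' r) := by
  intro a b ha hab
  refine ⟨(hf.intervalIntegrable ha hab).add (hg.intervalIntegrable ha hab), ?_⟩
  rw [intervalIntegral.integral_add (hf.intervalIntegrable ha hab) (hg.intervalIntegrable ha hab),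
    hf.integral_eq ha hab, hg.integral_eq ha hab]
  ring

theorem const_mul (c : ℝ) (hf : IsLocAC f f') :
    IsLocAC (fun r => c * f r) (fun r => c * f' r) := by
  intro a b ha hab
  refine ⟨(hf.intervalIntegrable ha hab).const_mul c, ?_⟩
  rw [intervalIntegral.integral_const_mul, hf.integral_eq ha hab]
  ring

theorem const (c : ℝ) : IsLocAC (fun _ => c) (fun _ => 0) := fun a b _ _ => by simp

theorem sub (hf : IsLocAC f f') (hg : IsLocAC g g') :
    IsLocAC (fun r => f r - g r) (fun r => f' r - g' r) := by
  simpa [sub_eq_add_neg] using hf.add (hg.const_mul (-1))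

theorem mul (hf : IsLocAC f f') (hg : IsLocAC g g') :
    IsLocAC (fun r => f r * g r) (fun r => f' r * g r + f r * g' r) := by
  refine of_ae_hasDerivAt (fun a b ha hab => (hf.absolutelyContinuousOnInterval ha hab).mul
    (hg.absolutelyContinuousOnInterval ha hab)) ?_
  filter_upwards [hf.ae_hasDerivAt, hg.ae_hasDerivAt] with x hx hy using hx.mul hy

theorem of_hasDerivAt (h : ∀ x ∈ Ioi (0:ℝ), HasDerivAt f (f' x) x)
    (hc : ContinuousOn f' (Ioi 0)) : IsLocAC f f' := by
  intro a b ha hab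
  have hs : uIcc a b ⊆ Ioi 0 := by
    rw [uIcc_of_le hab]; exact fun x hx => ha.trans_le hx.1
  have hi : IntervalIntegrable f' volume a b := (hc.mono hs).intervalIntegrable
  exact ⟨hi, (intervalIntegral.integral_eq_sub_of_hasDerivAt (fun x hx => h x (hs hx)) hi).symm⟩

/-- An a.e. lower bound of the derivative bounds the increment from below. -/
theorem integral_le_sub (hf : IsLocAC f f') {a b : ℝ} (ha : 0 < a) (hab : a ≤ b)
    (hg : IntervalIntegrable g volume a b)
    (h : ∀ᵐ x ∂(volume.restrict (Ioi (0:ℝ))), x ∈ Ioc a b → g x ≤ f' x) :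
    ∫ r in a..b, g r ≤ f b - f a := by
  rw [← hf.integral_eq ha hab]
  have hsub : Ioc a b ⊆ Ioi 0 := fun x hx => ha.trans hx.1
  rw [intervalIntegral.integral_of_le hab, intervalIntegral.integral_of_le hab]
  refine setIntegral_mono_ae_restrict hg.1 (hf.intervalIntegrable ha hab).1 ?_
  filter_upwards [ae_restrict_of_ae_restrict_of_subset hsub h,
    ae_restrict_mem measurableSet_Ioc] with x hx hxm using hx hxm

end IsLocAC

/-- A function that is a.e. nonnegative on `(0,∞)` and has uniformly bounded integrals over
compact subintervals is integrable. -/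
theorem integrableOn_Ioi_of_intervalIntegral_le {f : ℝ → ℝ} {M : ℝ}
    (hi : ∀ a b : ℝ, 0 < a → a ≤ b → IntervalIntegrable f volume a b)
    (h0 : ∀ᵐ x ∂(volume.restrict (Ioi (0:ℝ))), 0 ≤ f x)
    (hM : ∀ a b : ℝ, 0 < a → a ≤ 1 → 1 ≤ b → ∫ r in a..b, f r ≤ M) :
    IntegrableOn f (Ioi 0) ∧ ∫ r in Ioi (0:ℝ), f r ≤ M := by
  have hcov : AECover (volume.restrict (Ioi (0:ℝ))) atTop
      (fun n : ℕ => Ioc (1 / ((n:ℝ) + 1)) ((n:ℝ) + 1)) := by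
    have h1 : AECover (volume.restrict (Ioi (0:ℝ))) atTop
        (fun n : ℕ => Ioi (1 / ((n:ℝ) + 1))) :=
      aecover_Ioi_of_Ioi tendsto_one_div_add_atTop_nhds_zero_nat
    have h2 : AECover (volume.restrict (Ioi (0:ℝ))) atTop
        (fun n : ℕ => Iic ((n:ℝ) + 1)) :=
      aecover_Iic (tendsto_atTop_add_const_right _ _ tendsto_natCast_atTop_atTop)
    exact h1.inter h2
  have hpos : ∀ n : ℕ, (0:ℝ) < 1 / ((n:ℝ) + 1) := fun n => by positivity
  have hle1 : ∀ n : ℕ, 1 / ((n:ℝ) + 1) ≤ (1:ℝ) := fun n => by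
    rw [div_le_iff₀ (by positivity)]; linarith [(n.cast_nonneg : (0:ℝ) ≤ n)]
  have hle2 : ∀ n : ℕ, (1:ℝ) ≤ (n:ℝ) + 1 := fun n => by
    linarith [(n.cast_nonneg : (0:ℝ) ≤ n)]
  have hrest : ∀ n : ℕ, (volume.restrict (Ioi (0:ℝ))).restrict
      (Ioc (1 / ((n:ℝ) + 1)) ((n:ℝ) + 1)) = volume.restrict (Ioc (1 / ((n:ℝ) + 1)) ((n:ℝ) + 1)) :=
    fun n => Measure.restrict_restrict_of_subset (fun x hx => (hpos n).trans hx.1)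
  have hint : IntegrableOn f (Ioi 0) := by
    refine hcov.integrable_of_integral_bounded_of_nonneg_ae M (fun n => ?_) h0 ?_
    · rw [IntegrableOn, hrest]
      exact (hi _ _ (hpos n) ((hle1 n).trans (hle2 n))).1
    · refine Eventually.of_forall fun n => ?_
      rw [hrest, ← intervalIntegral.integral_of_le ((hle1 n).trans (hle2 n))]
      exact hM _ _ (hpos n) (hle1 n) (hle2 n)
  refine ⟨hint, le_of_tendsto (hcov.integral_tendsto_of_countably_generated hint) ?_⟩
  refine Eventually.of_forall fun n => ?_
  rw [hrest, ← intervalIntegral.integral_of_le ((hle1 n).trans (hle2 n))]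
  exact hM _ _ (hpos n) (hle1 n) (hle2 n)

theorem h1f_eq (m : ℕ) {r : ℝ} (hr : 0 < r) : h1f m r = 2 * r ^ m / ((r ^ m) ^ 2 + 1) := by
  have hp : 0 < r ^ m := pow_pos hr m
  rw [h1f, zpow_neg, zpow_natCast]
  field_simp

theorem h3f_eq (m : ℕ) {r : ℝ} (hr : 0 < r) :
    h3f m r = ((r ^ m) ^ 2 - 1) / ((r ^ m) ^ 2 + 1) := by
  have hp : 0 < r ^ m := pow_pos hr m
  rw [h3f, zpow_neg, zpow_natCast]
  field_simp

theorem h1f_pos (m : ℕ) {r : ℝ} (hr : 0 < r) : 0 < h1f m r := by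
  rw [h1f_eq m hr]; positivity

theorem h1f_sq_add_h3f_sq (m : ℕ) {r : ℝ} (hr : 0 < r) : h1f m r ^ 2 + h3f m r ^ 2 = 1 := by
  have hp : 0 < r ^ m := pow_pos hr m
  rw [h1f_eq m hr, h3f_eq m hr]
  field_simp
  ring

theorem h1f_le_one (m : ℕ) {r : ℝ} (hr : 0 < r) : h1f m r ≤ 1 := by
  nlinarith [h1f_sq_add_h3f_sq m hr, h1f_pos m hr, sq_nonneg (h3f m r)]

theorem abs_h3f_le_one (m : ℕ) {r : ℝ} (hr : 0 < r) : |h3f m r| ≤ 1 :=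
  abs_le_one_iff_mul_self_le_one.2 (by nlinarith [h1f_sq_add_h3f_sq m hr, sq_nonneg (h1f m r)])

theorem h1f_one (m : ℕ) : h1f m 1 = 1 := by rw [h1f_eq m one_pos]; norm_num

theorem h3f_one (m : ℕ) : h3f m 1 = 0 := by rw [h3f_eq m one_pos]; norm_num

theorem hasDerivAt_pow_div (m : ℕ) {r : ℝ} (hr : 0 < r) :
    HasDerivAt (fun x : ℝ => x ^ m) ((m : ℝ) / r * r ^ m) r := by
  refine (hasDerivAt_pow m r).congr_deriv ?_
  rcases m with _ | n
  · simp
  · simp only [Nat.add_sub_cancel, pow_succ]; field_simp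

theorem hasDerivAt_h1f (m : ℕ) {r : ℝ} (hr : 0 < r) :
    HasDerivAt (h1f m) (-((m : ℝ) / r) * h1f m r * h3f m r) r := by
  have hp : 0 < r ^ m := pow_pos hr m
  have h := hasDerivAt_pow_div m hr
  have h2 : HasDerivAt (fun x : ℝ => 2 * x ^ m / ((x ^ m) ^ 2 + 1)) _ r :=
    (h.const_mul 2).div ((h.pow 2).add_const 1) (by positivity)
  have h3 : h1f m =ᶠ[nhds r] fun x : ℝ => 2 * x ^ m / ((x ^ m) ^ 2 + 1) := by
    filter_upwards [lt_mem_nhds hr] with x hx using h1f_eq m hx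
  refine (h2.congr_of_eventuallyEq h3).congr_deriv ?_
  rw [h1f_eq m hr, h3f_eq m hr]
  field_simp
  push_cast
  ring

theorem hasDerivAt_h3f (m : ℕ) {r : ℝ} (hr : 0 < r) :
    HasDerivAt (h3f m) ((m : ℝ) / r * h1f m r ^ 2) r := by
  have hp : 0 < r ^ m := pow_pos hr m
  have h := hasDerivAt_pow_div m hr
  have h2 : HasDerivAt (fun x : ℝ => ((x ^ m) ^ 2 - 1) / ((x ^ m) ^ 2 + 1)) _ r :=
    ((h.pow 2).sub_const 1).div ((h.pow 2).add_const 1) (by positivity)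
  have h3 : h3f m =ᶠ[nhds r] fun x : ℝ => ((x ^ m) ^ 2 - 1) / ((x ^ m) ^ 2 + 1) := by
    filter_upwards [lt_mem_nhds hr] with x hx using h3f_eq m hx
  refine (h2.congr_of_eventuallyEq h3).congr_deriv ?_
  rw [h1f_eq m hr]
  simp only [Pi.pow_apply]
  field_simp
  push_cast
  ring

theorem continuousOn_h1f (m : ℕ) : ContinuousOn (h1f m) (Ioi 0) := fun _ hx =>
  (hasDerivAt_h1f m hx).continuousAt.continuousWithinAt

theorem continuousOn_h3f (m : ℕ) : ContinuousOn (h3f m) (Ioi 0) := fun _ hx =>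
  (hasDerivAt_h3f m hx).continuousAt.continuousWithinAt

theorem continuousOn_const_div (c : ℝ) : ContinuousOn (fun r : ℝ => c / r) (Ioi 0) :=
  continuousOn_const.div continuousOn_id fun _ hx => (ne_of_gt hx)

theorem isLocAC_h1f (m : ℕ) : IsLocAC (h1f m) (fun r => -((m : ℝ) / r) * h1f m r * h3f m r) :=
  .of_hasDerivAt (fun _ hx => hasDerivAt_h1f m hx)
    (((continuousOn_const_div _).neg.mul (continuousOn_h1f m)).mul (continuousOn_h3f m))

theorem isLocAC_h3f (m : ℕ) : IsLocAC (h3f m) (fun r => (m : ℝ) / r * h1f m r ^ 2) :=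
  .of_hasDerivAt (fun _ hx => hasDerivAt_h3f m hx)
    ((continuousOn_const_div _).mul ((continuousOn_h1f m).pow 2))

theorem le_mul_h3f {m : ℕ} (hm : 1 ≤ m) {r : ℝ} (hr : 1 ≤ r) :
    (r ^ 2 - 1) / (r ^ 2 + 1) ≤ m * h3f m r := by
  have hr0 : 0 < r := by linarith
  have hp : r ≤ r ^ m := le_self_pow₀ hr (by omega)
  have hm' : (1:ℝ) ≤ m := by exact_mod_cast hm
  have h : (r ^ 2 - 1) / (r ^ 2 + 1) ≤ h3f m r := by
    rw [h3f_eq m hr0, div_le_div_iff₀ (by positivity) (by positivity)]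
    nlinarith
  have h0 : 0 ≤ (r ^ 2 - 1) / (r ^ 2 + 1) := div_nonneg (by nlinarith) (by positivity)
  nlinarith

theorem mul_h3f_le {m : ℕ} (hm : 1 ≤ m) {r : ℝ} (hr0 : 0 < r) (hr : r ≤ 1) :
    m * h3f m r ≤ (r ^ 2 - 1) / (r ^ 2 + 1) := by
  have hp : r ^ m ≤ r := pow_le_of_le_one hr0.le hr (by omega)
  have hp0 : 0 < r ^ m := pow_pos hr0 m
  have hm' : (1:ℝ) ≤ m := by exact_mod_cast hm
  have h : h3f m r ≤ (r ^ 2 - 1) / (r ^ 2 + 1) := by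
    rw [h3f_eq m hr0, div_le_div_iff₀ (by positivity) (by positivity)]
    nlinarith
  have h0 : (r ^ 2 - 1) / (r ^ 2 + 1) ≤ 0 :=
    div_nonpos_of_nonpos_of_nonneg (by nlinarith) (by positivity)
  nlinarith

/-- The part of the energy density that is not a null Lagrangian: a.e. equal to
`r |v' - (m/r)(k̂ - v₃ v)|²`. -/
def defect (m : ℕ) (v dv : ℝ → V3) (r : ℝ) : ℝ := eDen m v dv r - 2 * m * dv r 2

/-- The residual `v' - (m/r)(k̂ - v₃ v)` of the first order equation of harmonic maps. -/
def resid (m : ℕ) (v dv : ℝ → V3) (r : ℝ) (i : Fin 3) : ℝ :=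
  dv r i - m / r * (kHat i - v r 2 * v r i)

namespace InSigma

variable {m : ℕ} {v dv : ℝ → V3}

theorem isLocAC (h : InSigma m v dv) (i : Fin 3) : IsLocAC (fun r => v r i) (fun r => dv r i) :=
  fun a b ha hab => ⟨h.1.1 a b ha hab i, h.1.2 a b ha hab i⟩

theorem nsq3_eq (h : InSigma m v dv) {r : ℝ} (hr : 0 < r) :
    v r 0 ^ 2 + v r 1 ^ 2 + v r 2 ^ 2 = 1 := h.2.1 r hr

theorem ae_dot_eq_zero (h : InSigma m v dv) : ∀ᵐ r ∂(volume.restrict (Ioi (0:ℝ))),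
    v r 0 * dv r 0 + v r 1 * dv r 1 + v r 2 * dv r 2 = 0 := by
  filter_upwards [(h.isLocAC 0).ae_hasDerivAt, (h.isLocAC 1).ae_hasDerivAt,
    (h.isLocAC 2).ae_hasDerivAt, ae_restrict_mem measurableSet_Ioi] with r h0 h1 h2 hr
  have hd := ((h0.mul h0).add (h1.mul h1)).add (h2.mul h2)
  have hc : HasDerivAt (fun _ : ℝ => (1:ℝ)) 0 r := hasDerivAt_const r 1
  have he : (fun _ : ℝ => (1:ℝ)) =ᶠ[nhds r] ((fun r => v r 0) * (fun r => v r 0) +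
      (fun r => v r 1) * (fun r => v r 1) + (fun r => v r 2) * (fun r => v r 2)) := by
    filter_upwards [lt_mem_nhds (show (0:ℝ) < r from hr)] with x hx
    simp only [Pi.add_apply, Pi.mul_apply]
    linarith [h.nsq3_eq hx]
  have := (hd.congr_of_eventuallyEq he).unique hc
  linarith

theorem ae_resid (h : InSigma m v dv) : ∀ᵐ r ∂(volume.restrict (Ioi (0:ℝ))),
    defect m v dv r = r * (resid m v dv r 0 ^ 2 + resid m v dv r 1 ^ 2 + resid m v dv r 2 ^ 2) ∧
    v r 0 * resid m v dv r 0 + v r 1 * resid m v dv r 1 + v r 2 * resid m v dv r 2 = 0 := by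
  filter_upwards [h.ae_dot_eq_zero, ae_restrict_mem measurableSet_Ioi] with r hd hr
  have hr : (0:ℝ) < r := hr
  have hv := h.nsq3_eq hr
  have hq : (m:ℝ) = m / r * r := by field_simp
  have hq2 : (m:ℝ) ^ 2 / r ^ 2 = (m / r) ^ 2 := by rw [div_pow]
  simp only [defect, resid, eDen, nsq3, kHat, hq2]
  rw [show 2 * (m:ℝ) * dv r 2 = 2 * (m / r * r) * dv r 2 by rw [← hq]]
  generalize (m:ℝ) / r = q
  simp only [Matrix.cons_val_zero, Matrix.cons_val_one, Matrix.cons_val]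
  constructor
  · linear_combination (-(2 * q * r * v r 2)) * hd + (q ^ 2 * r * (1 - v r 2 ^ 2)) * hv
  · linear_combination hd + q * v r 2 * hv

theorem ae_defect_nonneg (h : InSigma m v dv) :
    ∀ᵐ r ∂(volume.restrict (Ioi (0:ℝ))), 0 ≤ defect m v dv r := by
  filter_upwards [h.ae_resid, ae_restrict_mem measurableSet_Ioi] with r hd hr
  have hr : (0:ℝ) < r := hr
  rw [hd.1]; positivity

theorem intervalIntegrable_defect (h : InSigma m v dv) {a b : ℝ} (ha : 0 < a) (hab : a ≤ b) :
    IntervalIntegrable (defect m v dv) volume a b := by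
  have hsub : Ioc a b ⊆ Ioi 0 := fun x hx => ha.trans hx.1
  have h1 : IntervalIntegrable (eDen m v dv) volume a b :=
    (intervalIntegrable_iff_integrableOn_Ioc_of_le hab).2 (h.2.2.1.mono_set hsub)
  exact h1.sub (((h.isLocAC 2).intervalIntegrable ha hab).const_mul (2 * (m:ℝ)))

theorem ae_eDen_nonneg : ∀ᵐ r ∂(volume.restrict (Ioi (0:ℝ))), 0 ≤ eDen m v dv r := by
  filter_upwards [ae_restrict_mem measurableSet_Ioi] with r hr
  have hr : (0:ℝ) < r := hr
  simp only [eDen, nsq3]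
  positivity

theorem intervalIntegral_defect_mono (h : InSigma m v dv) {a b c d : ℝ} (hc : 0 < c) (hca : c ≤ a)
    (hab : a ≤ b) (hbd : b ≤ d) :
    ∫ r in a..b, defect m v dv r ≤ ∫ r in c..d, defect m v dv r := by
  refine intervalIntegral.integral_mono_interval hca hab hbd ?_
    (h.intervalIntegrable_defect hc (hca.trans (hab.trans hbd)))
  exact ae_restrict_of_ae_restrict_of_subset (fun x hx => hc.trans hx.1) h.ae_defect_nonneg

/-- The integral of the defect is at most the energy excess. -/
theorem intervalIntegral_defect_le (h : InSigma m v dv) {a b : ℝ} (ha : 0 < a) (hab : a ≤ b) :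
    ∫ r in a..b, defect m v dv r ≤ energy m v dv / π - 4 * m := by
  have hE : energy m v dv / π = ∫ r in Ioi (0:ℝ), eDen m v dv r := by
    rw [energy]; field_simp
  have key : ∀ c d, 0 < c → c ≤ a → b ≤ d →
      ∫ r in a..b, defect m v dv r ≤ energy m v dv / π - 2 * m * (v d 2 - v c 2) := by
    intro c d hc hca hbd
    have hcd : c ≤ d := hca.trans (hab.trans hbd)
    have hsub : Ioc c d ⊆ Ioi 0 := fun x hx => hc.trans hx.1
    refine (h.intervalIntegral_defect_mono hc hca hab hbd).trans ?_
    have h1 : IntervalIntegrable (eDen m v dv) volume c d :=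
      (intervalIntegrable_iff_integrableOn_Ioc_of_le hcd).2 (h.2.2.1.mono_set hsub)
    simp only [defect]
    rw [intervalIntegral.integral_sub h1
      (((h.isLocAC 2).intervalIntegrable hc hcd).const_mul (2 * (m:ℝ))),
      intervalIntegral.integral_const_mul, (h.isLocAC 2).integral_eq hc hcd, hE,
      intervalIntegral.integral_of_le hcd]
    have := setIntegral_mono_set h.2.2.1 ae_eDen_nonneg hsub.eventuallyLE
    linarith
  have t0 : Tendsto (fun c => v c 2) (nhdsWithin 0 (Ioi 0)) (nhds (-1)) := by
    simpa [negkHat] using (tendsto_pi_nhds.1 h.2.2.2.1) 2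
  have t1 : Tendsto (fun d => v d 2) atTop (nhds 1) := by
    simpa [kHat] using (tendsto_pi_nhds.1 h.2.2.2.2) 2
  have key2 : ∀ c, 0 < c → c ≤ a →
      ∫ r in a..b, defect m v dv r ≤ energy m v dv / π - 2 * m * (1 - v c 2) := by
    intro c hc hca
    refine ge_of_tendsto (((t1.sub_const (v c 2)).const_mul (2 * (m:ℝ))).const_sub _) ?_
    filter_upwards [eventually_ge_atTop b] with d hd using key c d hc hca hd
  have : ∫ r in a..b, defect m v dv r ≤ energy m v dv / π - 2 * m * (1 - -1) := by
    refine ge_of_tendsto (((t0.const_sub 1).const_mul (2 * (m:ℝ))).const_sub _) ?_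
    filter_upwards [self_mem_nhdsWithin, nhdsWithin_le_nhds (Iic_mem_nhds ha)] with c hc hca
      using key2 c hc hca
  linarith

theorem excess_nonneg (h : InSigma m v dv) : 0 ≤ energy m v dv / π - 4 * m := by
  simpa using h.intervalIntegral_defect_le one_pos le_rfl

/-- The third component is increasing up to the energy excess. -/
theorem sub_le_third (h : InSigma m v dv) (hm : 1 ≤ m) {a b : ℝ} (ha : 0 < a) (hab : a ≤ b) :
    v a 2 - (energy m v dv / π - 4 * m) / (4 * m) ≤ v b 2 := by
  have hm' : (0:ℝ) < m := by exact_mod_cast hm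
  have h1 : ∫ r in a..b, -(1 / (4 * (m:ℝ))) * defect m v dv r ≤ v b 2 - v a 2 := by
    refine (h.isLocAC 2).integral_le_sub ha hab
      ((h.intervalIntegrable_defect ha hab).const_mul _) ?_
    filter_upwards [h.ae_resid, ae_restrict_mem measurableSet_Ioi] with r hd hr _
    have hr : (0:ℝ) < r := hr
    have hv := h.nsq3_eq hr
    obtain ⟨hd1, hd2⟩ := hd
    have e2 : dv r 2 = resid m v dv r 2 + m / r * (1 - v r 2 ^ 2) := by
      simp [resid, kHat]; ring
    rw [hd1, e2]
    generalize resid m v dv r 0 = w0 at *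
    generalize resid m v dv r 1 = w1 at *
    generalize resid m v dv r 2 = w2 at *
    have hX : 0 ≤ 1 - v r 2 ^ 2 := by nlinarith [sq_nonneg (v r 0), sq_nonneg (v r 1)]
    have hw : w2 ^ 2 ≤ (w0 ^ 2 + w1 ^ 2 + w2 ^ 2) * (1 - v r 2 ^ 2) := by
      have e3 : v r 2 * w2 = -(v r 0 * w0 + v r 1 * w1) := by linarith
      have e4 : 1 - v r 2 ^ 2 = v r 0 ^ 2 + v r 1 ^ 2 := by linarith
      have e5 : (v r 2 * w2) ^ 2 = (v r 0 * w0 + v r 1 * w1) ^ 2 := by rw [e3]; ring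
      have e6 : w2 ^ 2 = w2 ^ 2 * (v r 0 ^ 2 + v r 1 ^ 2) + (v r 2 * w2) ^ 2 := by
        linear_combination (-(w2 ^ 2)) * hv
      rw [e4]
      nlinarith [sq_nonneg (v r 0 * w1 - v r 1 * w0)]
    have hab2 : |w2| ≤ m / r * (1 - v r 2 ^ 2) +
        1 / (4 * (m:ℝ)) * (r * (w0 ^ 2 + w1 ^ 2 + w2 ^ 2)) := by
      refine abs_le_of_sq_le_sq (hw.trans ?_) (by positivity)
      have e : m / r * (1 - v r 2 ^ 2) * (1 / (4 * (m:ℝ)) * (r * (w0 ^ 2 + w1 ^ 2 + w2 ^ 2))) =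
          (w0 ^ 2 + w1 ^ 2 + w2 ^ 2) * (1 - v r 2 ^ 2) / 4 := by
        field_simp
      nlinarith [sq_nonneg (m / r * (1 - v r 2 ^ 2) -
        1 / (4 * (m:ℝ)) * (r * (w0 ^ 2 + w1 ^ 2 + w2 ^ 2)))]
    linarith [neg_abs_le w2]
  rw [intervalIntegral.integral_const_mul] at h1
  have h2 : 1 / (4 * (m:ℝ)) * ∫ r in a..b, defect m v dv r ≤
      (energy m v dv / π - 4 * m) / (4 * m) := by
    rw [one_div, div_eq_inv_mul]
    exact mul_le_mul_of_nonneg_left (h.intervalIntegral_defect_le ha hab) (by positivity)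
  linarith

end InSigma

/-- The squared distance of the unit vector `v r` to the harmonic map profile. -/
def hdist (m : ℕ) (v : ℝ → V3) (r : ℝ) : ℝ := 2 - 2 * (v r 0 * h1f m r + v r 2 * h3f m r)

/-- The a.e. derivative of `hdist`. -/
def dhdist (m : ℕ) (v dv : ℝ → V3) (r : ℝ) : ℝ :=
  0 - 2 * ((dv r 0 * h1f m r + v r 0 * (-((m : ℝ) / r) * h1f m r * h3f m r)) +
    (dv r 2 * h3f m r + v r 2 * ((m : ℝ) / r * h1f m r ^ 2)))

namespace InSigma

variable {m : ℕ} {v dv : ℝ → V3}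

theorem isLocAC_hdist (h : InSigma m v dv) : IsLocAC (hdist m v) (dhdist m v dv) :=
  (IsLocAC.const 2).sub ((((h.isLocAC 0).mul (isLocAC_h1f m)).add
    ((h.isLocAC 2).mul (isLocAC_h3f m))).const_mul 2)

theorem hdist_eq (h : InSigma m v dv) {r : ℝ} (hr : 0 < r) :
    hdist m v r = (v r 0 - h1f m r) ^ 2 + v r 1 ^ 2 + (v r 2 - h3f m r) ^ 2 := by
  rw [hdist]
  linear_combination -(h.nsq3_eq hr) - h1f_sq_add_h3f_sq m hr

theorem hdist_nonneg (h : InSigma m v dv) {r : ℝ} (hr : 0 < r) : 0 ≤ hdist m v r := by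
  rw [h.hdist_eq hr]; positivity

theorem ae_dhdist (h : InSigma m v dv) : ∀ᵐ r ∂(volume.restrict (Ioi (0:ℝ))),
    |dhdist m v dv r + 1 / r * (m * h3f m r + m * v r 2) * hdist m v r| ≤
      hdist m v r / (4 * r) + 4 * defect m v dv r := by
  filter_upwards [h.ae_resid, ae_restrict_mem measurableSet_Ioi] with r hd hr
  have hr : (0:ℝ) < r := hr
  obtain ⟨hd1, hd2⟩ := hd
  have hv := h.nsq3_eq hr
  have hh := h1f_sq_add_h3f_sq m hr
  have hP := h.hdist_eq hr
  have hP0 := h.hdist_nonneg hr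
  have e0 : dv r 0 = resid m v dv r 0 - m / r * (v r 2 * v r 0) := by simp [resid, kHat]
  have e2 : dv r 2 = resid m v dv r 2 + m / r * (1 - v r 2 * v r 2) := by simp [resid, kHat]
  have e : dhdist m v dv r + 1 / r * (m * h3f m r + m * v r 2) * hdist m v r =
      -2 * (resid m v dv r 0 * h1f m r + resid m v dv r 2 * h3f m r) := by
    rw [dhdist, e0, e2, hdist]
    have : (1 / r * (m * h3f m r + m * v r 2)) = m / r * (h3f m r + v r 2) := by ring
    rw [this]
    linear_combination (-2 * (m / r) * v r 2) * hh
  rw [e, hd1]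
  generalize resid m v dv r 0 = w0 at *
  generalize resid m v dv r 1 = w1 at *
  generalize resid m v dv r 2 = w2 at *
  have hS : w0 * h1f m r + w2 * h3f m r =
      -(w0 * (v r 0 - h1f m r) + w1 * v r 1 + w2 * (v r 2 - h3f m r)) := by linarith
  have hS2 : (w0 * h1f m r + w2 * h3f m r) ^ 2 ≤ (w0 ^ 2 + w1 ^ 2 + w2 ^ 2) * hdist m v r := by
    rw [hS, hP]
    generalize v r 0 - h1f m r = x
    generalize v r 2 - h3f m r = z
    nlinarith [sq_nonneg (w0 * v r 1 - w1 * x), sq_nonneg (w0 * z - w2 * x),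
      sq_nonneg (w1 * z - w2 * v r 1)]
  refine abs_le_of_sq_le_sq ?_ (by positivity)
  have e3 : hdist m v r / (4 * r) * (4 * (r * (w0 ^ 2 + w1 ^ 2 + w2 ^ 2))) =
      (w0 ^ 2 + w1 ^ 2 + w2 ^ 2) * hdist m v r := by field_simp
  nlinarith [sq_nonneg (hdist m v r / (4 * r) - 4 * (r * (w0 ^ 2 + w1 ^ 2 + w2 ^ 2)))]

theorem continuousOn_hdist_div (h : InSigma m v dv) (c : ℝ) :
    ContinuousOn (fun r => hdist m v r * (c / r)) (Ioi 0) :=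
  h.isLocAC_hdist.continuousOn.mul (continuousOn_const_div c)

theorem intervalIntegrable_hdist_div (h : InSigma m v dv) (c : ℝ) {a b : ℝ} (ha : 0 < a)
    (hab : a ≤ b) : IntervalIntegrable (fun r => hdist m v r * (c / r)) volume a b := by
  refine ((h.continuousOn_hdist_div c).mono ?_).intervalIntegrable
  rw [uIcc_of_le hab]
  exact fun x hx => ha.trans_le hx.1

theorem hdist_le_right (h : InSigma m v dv) (hm : 1 ≤ m) (h1 : |v 1 2| ≤ 1 / (8 * m))
    (hE : energy m v dv / π - 4 * m ≤ 1 / 2) {b : ℝ} (hb : 1 ≤ b) :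
    hdist m v b + ∫ r in (1:ℝ)..b, hdist m v r * ((1 / 2) / r) ≤
      2 * hdist m v 1 + 8 * (energy m v dv / π - 4 * m) := by
  have hm' : (0:ℝ) < m := by exact_mod_cast hm
  have hw : IsLocAC (fun r : ℝ => -1 - 1 / r ^ 2) (fun r => 2 / r ^ 3) := by
    refine .of_hasDerivAt (fun x hx => ?_) ?_
    · have hx : x ≠ 0 := ne_of_gt hx
      have := ((hasDerivAt_const x (1:ℝ)).div (hasDerivAt_pow 2 x)
        (pow_ne_zero 2 hx)).const_sub (-1)
      refine this.congr_deriv ?_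
      field_simp
      norm_num
      ring
    · exact continuousOn_const.div (by fun_prop) fun x hx => pow_ne_zero 3 (ne_of_gt hx)
  have hi := (h.intervalIntegrable_hdist_div (1/2) one_pos hb).sub
    ((h.intervalIntegrable_defect one_pos hb).const_mul 8)
  have key := (hw.mul h.isLocAC_hdist).integral_le_sub one_pos hb hi ?_
  · rw [intervalIntegral.integral_sub (h.intervalIntegrable_hdist_div (1/2) one_pos hb)
      ((h.intervalIntegrable_defect one_pos hb).const_mul 8),
      intervalIntegral.integral_const_mul] at key
    have h2 := h.intervalIntegral_defect_le one_pos hb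
    have h3 : 0 ≤ 1 / b ^ 2 * hdist m v b :=
      mul_nonneg (by positivity) (h.hdist_nonneg (by linarith))
    norm_num at key h3 ⊢
    linarith
  filter_upwards [h.ae_dhdist, h.ae_defect_nonneg] with r hr hg hrm
  have hr1 : 1 < r := hrm.1
  have hr0 : 0 < r := by linarith
  have hP := h.hdist_nonneg hr0
  have hA := le_mul_h3f hm hr1.le
  have hv2 : -(1 / 4) ≤ m * v r 2 := by
    have := h.sub_le_third hm one_pos hr1.le
    have h5 : (energy m v dv / π - 4 * m) / (4 * m) ≤ 1 / (8 * m) := by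
      rw [div_le_div_iff₀ (by positivity) (by positivity)]; nlinarith
    have h6 : -(1 / (4 * (m:ℝ))) ≤ v r 2 := by
      have h7 : 1 / (8 * (m:ℝ)) + 1 / (8 * m) = 1 / (4 * m) := by field_simp; norm_num
      linarith [(abs_le.1 h1).1]
    have h8 := mul_le_mul_of_nonneg_left h6 hm'.le
    have h9 : (m:ℝ) * -(1 / (4 * (m:ℝ))) = -(1/4) := by field_simp
    linarith
  have hup := (abs_le.1 hr).2
  generalize hdist m v r = P at *
  generalize dhdist m v dv r = P' at *
  generalize defect m v dv r = g at *
  have hB : (r ^ 2 - 1) / (r ^ 2 + 1) - 1 / 4 ≤ m * h3f m r + m * v r 2 := by linarith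
  have hB2 : 1 / r * ((r ^ 2 - 1) / (r ^ 2 + 1) - 1 / 4) * P ≤
      1 / r * (m * h3f m r + m * v r 2) * P := by gcongr
  have hP' : P' ≤ P / (4 * r) + 4 * g - 1 / r * ((r ^ 2 - 1) / (r ^ 2 + 1) - 1 / 4) * P := by
    linarith
  have hφ1 : 1 / r ^ 2 ≤ 1 := by
    rw [div_le_one (by positivity)]; nlinarith
  have hφ : (1 + 1 / r ^ 2) * P' ≤ (1 + 1 / r ^ 2) *
      (P / (4 * r) + 4 * g - 1 / r * ((r ^ 2 - 1) / (r ^ 2 + 1) - 1 / 4) * P) :=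
    mul_le_mul_of_nonneg_left hP' (by positivity)
  have e : (1 + 1 / r ^ 2) *
      (P / (4 * r) + 4 * g - 1 / r * ((r ^ 2 - 1) / (r ^ 2 + 1) - 1 / 4) * P) - 2 / r ^ 3 * P =
      (1 + 1 / r ^ 2) * (4 * g) - (1 + 1 / r ^ 2) * (P * ((1/2) / r)) := by
    field_simp
    ring
  have h3 : 0 ≤ P * (1 / 2 / r) := by positivity
  have h4 : 0 ≤ 1 / r ^ 2 * (P * (1 / 2 / r)) := by positivity
  nlinarith

theorem hdist_le_left (h : InSigma m v dv) (hm : 1 ≤ m) (h1 : |v 1 2| ≤ 1 / (8 * m))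
    (hE : energy m v dv / π - 4 * m ≤ 1 / 2) {a : ℝ} (ha : 0 < a) (ha1 : a ≤ 1) :
    hdist m v a + ∫ r in a..1, hdist m v r * ((1 / 2) / r) ≤
      2 * hdist m v 1 + 8 * (energy m v dv / π - 4 * m) := by
  have hm' : (0:ℝ) < m := by exact_mod_cast hm
  have hw : IsLocAC (fun r : ℝ => 1 + r ^ 2) (fun r => 2 * r) := by
    refine .of_hasDerivAt (fun x hx => ?_) (by fun_prop)
    refine ((hasDerivAt_pow 2 x).const_add 1).congr_deriv ?_
    norm_num
  have hi := (h.intervalIntegrable_hdist_div (1/2) ha ha1).sub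
    ((h.intervalIntegrable_defect ha ha1).const_mul 8)
  have key := (hw.mul h.isLocAC_hdist).integral_le_sub ha ha1 hi ?_
  · rw [intervalIntegral.integral_sub (h.intervalIntegrable_hdist_div (1/2) ha ha1)
      ((h.intervalIntegrable_defect ha ha1).const_mul 8),
      intervalIntegral.integral_const_mul] at key
    have h2 := h.intervalIntegral_defect_le ha ha1
    have h3 : 0 ≤ a ^ 2 * hdist m v a :=
      mul_nonneg (by positivity) (h.hdist_nonneg (by linarith))
    norm_num at key h3 ⊢
    linarith
  filter_upwards [h.ae_dhdist, h.ae_defect_nonneg] with r hr hg hrm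
  have hr1 : r ≤ 1 := hrm.2
  have hr0 : 0 < r := ha.trans hrm.1
  have hP := h.hdist_nonneg hr0
  have hA := mul_h3f_le hm hr0 hr1
  have hv2 : m * v r 2 ≤ 1 / 4 := by
    have := h.sub_le_third hm hr0 hr1
    have h5 : (energy m v dv / π - 4 * m) / (4 * m) ≤ 1 / (8 * m) := by
      rw [div_le_div_iff₀ (by positivity) (by positivity)]; nlinarith
    have h6 : v r 2 ≤ (1 / (4 * (m:ℝ))) := by
      have h7 : 1 / (8 * (m:ℝ)) + 1 / (8 * m) = 1 / (4 * m) := by field_simp; norm_num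
      linarith [(abs_le.1 h1).2]
    have h8 := mul_le_mul_of_nonneg_left h6 hm'.le
    have h9 : (m:ℝ) * (1 / (4 * (m:ℝ))) = (1/4) := by field_simp
    linarith
  have hup := (abs_le.1 hr).1
  generalize hdist m v r = P at *
  generalize dhdist m v dv r = P' at *
  generalize defect m v dv r = g at *
  have hB : m * h3f m r + m * v r 2 ≤ (r ^ 2 - 1) / (r ^ 2 + 1) + 1 / 4 := by linarith
  have hB2 : 1 / r * (m * h3f m r + m * v r 2) * P ≤
      1 / r * ((r ^ 2 - 1) / (r ^ 2 + 1) + 1 / 4) * P := by gcongr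
  have hP' : -(P / (4 * r) + 4 * g) - 1 / r * ((r ^ 2 - 1) / (r ^ 2 + 1) + 1 / 4) * P ≤ P' := by
    linarith
  have hφ1 : r ^ 2 ≤ 1 := by nlinarith
  have hφ := mul_le_mul_of_nonneg_left hP' (by positivity : 0 ≤ 1 + r ^ 2)
  have e : (1 + r ^ 2) *
      (-(P / (4 * r) + 4 * g) - 1 / r * ((r ^ 2 - 1) / (r ^ 2 + 1) + 1 / 4) * P) + 2 * r * P =
      (1 + r ^ 2) * (P * ((1/2) / r)) - (1 + r ^ 2) * (4 * g) := by
    field_simp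
    ring
  have h3 : 0 ≤ P * (1 / 2 / r) := by positivity
  have h4 : 0 ≤ r ^ 2 * (P * (1 / 2 / r)) := by positivity
  nlinarith

theorem hdist_le (h : InSigma m v dv) (hm : 1 ≤ m) (h1 : |v 1 2| ≤ 1 / (8 * m))
    (hE : energy m v dv / π - 4 * m ≤ 1 / 2) {r : ℝ} (hr : 0 < r) :
    hdist m v r ≤ 2 * hdist m v 1 + 8 * (energy m v dv / π - 4 * m) := by
  have hpos : ∀ a b : ℝ, 0 < a → a ≤ b → 0 ≤ ∫ r in a..b, hdist m v r * ((1 / 2) / r) := by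
    intro a b ha hab
    refine intervalIntegral.integral_nonneg hab fun x hx => ?_
    have hx0 : 0 < x := ha.trans_le hx.1
    have := h.hdist_nonneg hx0
    positivity
  rcases le_total r 1 with h2 | h2
  · linarith [h.hdist_le_left hm h1 hE hr h2, hpos r 1 hr h2]
  · linarith [h.hdist_le_right hm h1 hE h2, hpos 1 r one_pos h2]

theorem integral_hdist_le (h : InSigma m v dv) (hm : 1 ≤ m) (h1 : |v 1 2| ≤ 1 / (8 * m))
    (hE : energy m v dv / π - 4 * m ≤ 1 / 2) {a b : ℝ} (ha : 0 < a) (ha1 : a ≤ 1) (hb : 1 ≤ b) :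
    ∫ r in a..b, hdist m v r * (1 / r) ≤
      8 * hdist m v 1 + 32 * (energy m v dv / π - 4 * m) := by
  have e : ∀ r, hdist m v r * (1 / r) = 2 * (hdist m v r * ((1 / 2) / r)) := fun r => by ring
  simp only [e]
  rw [intervalIntegral.integral_const_mul, ← intervalIntegral.integral_add_adjacent_intervals
    (h.intervalIntegrable_hdist_div (1/2) ha ha1) (h.intervalIntegrable_hdist_div (1/2) one_pos hb)]
  linarith [h.hdist_le_left hm h1 hE ha ha1, h.hdist_le_right hm h1 hE hb,
    h.hdist_nonneg ha, h.hdist_nonneg (one_pos.trans_le hb)]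

end InSigma

/-- The complex coordinate of `v r` in the orthonormal frame `ĵ, h × ĵ`. -/
def tang (m : ℕ) (v : ℝ → V3) (r : ℝ) : ℂ :=
  (v r 1 : ℂ) + ((h1f m r * v r 2 - h3f m r * v r 0 : ℝ) : ℂ) * Complex.I

/-- The derivative of the second coordinate in `tang`. -/
def dtangIm (m : ℕ) (v dv : ℝ → V3) (r : ℝ) : ℝ :=
  (-((m : ℝ) / r) * h1f m r * h3f m r * v r 2 + h1f m r * dv r 2) -
    ((m : ℝ) / r * h1f m r ^ 2 * v r 0 + h3f m r * dv r 0)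

/-- The a.e. derivative of `tang`. -/
def dtang (m : ℕ) (v dv : ℝ → V3) (r : ℝ) : ℂ :=
  (dv r 1 : ℂ) + (dtangIm m v dv r : ℂ) * Complex.I

theorem norm_sq_add_mul_I (x y : ℝ) : ‖(x : ℂ) + (y : ℂ) * Complex.I‖ ^ 2 = x ^ 2 + y ^ 2 := by
  rw [← Complex.normSq_eq_norm_sq, Complex.normSq_add_mul_I]

theorem IsLocAC.locACC {f f' g g' : ℝ → ℝ} (hf : IsLocAC f f') (hg : IsLocAC g g') :
    LocACC (fun r => (f r : ℂ) + (g r : ℂ) * Complex.I)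
      (fun r => (f' r : ℂ) + (g' r : ℂ) * Complex.I) := by
  have h : ∀ {k k' : ℝ → ℝ}, IsLocAC k k' → ∀ a b : ℝ, 0 < a → a ≤ b →
      IntervalIntegrable (fun r => (k' r : ℂ)) volume a b := fun hk a b ha hab =>
    ⟨(hk.intervalIntegrable ha hab).1.ofReal, (hk.intervalIntegrable ha hab).2.ofReal⟩
  refine ⟨fun a b ha hab => (h hf a b ha hab).add ((h hg a b ha hab).mul_const _),
    fun a b ha hab => ?_⟩
  rw [intervalIntegral.integral_add (h hf a b ha hab) ((h hg a b ha hab).mul_const _),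
    intervalIntegral.integral_mul_const, intervalIntegral.integral_ofReal,
    intervalIntegral.integral_ofReal, hf.integral_eq ha hab, hg.integral_eq ha hab]
  push_cast
  ring

theorem sub_sq_le (x y : ℝ) : (x - y) ^ 2 ≤ 2 * (x ^ 2 + y ^ 2) := by
  nlinarith [sq_nonneg (x + y)]

namespace InSigma

variable {m : ℕ} {v dv : ℝ → V3}

theorem isLocAC_tangIm (h : InSigma m v dv) :
    IsLocAC (fun r => h1f m r * v r 2 - h3f m r * v r 0) (dtangIm m v dv) :=
  ((isLocAC_h1f m).mul (h.isLocAC 2)).sub ((isLocAC_h3f m).mul (h.isLocAC 0))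

theorem locACC_tang (h : InSigma m v dv) : LocACC (tang m v) (dtang m v dv) :=
  (h.isLocAC 1).locACC h.isLocAC_tangIm

theorem norm_tang_sq (h : InSigma m v dv) {r : ℝ} (hr : 0 < r) :
    ‖tang m v r‖ ^ 2 = 1 - (v r 0 * h1f m r + v r 2 * h3f m r) ^ 2 := by
  rw [tang, norm_sq_add_mul_I]
  linear_combination (h.nsq3_eq hr) + (v r 0 ^ 2 + v r 2 ^ 2) * h1f_sq_add_h3f_sq m hr

theorem splitting (h : InSigma m v dv) {r : ℝ} (hr : 0 < r) (hd : hdist m v r ≤ 2) :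
    v r = fun i => (1 + gamC (tang m v) r) * hProf m r i + Vrho m (tang m v r) r i := by
  have hc : 0 ≤ v r 0 * h1f m r + v r 2 * h3f m r := by rw [hdist] at hd; linarith
  have hg : 1 + gamC (tang m v) r = v r 0 * h1f m r + v r 2 * h3f m r := by
    rw [gamC, h.norm_tang_sq hr]
    ring_nf
    rw [show v r 0 * h1f m r * v r 2 * h3f m r * 2 + v r 0 ^ 2 * h1f m r ^ 2 +
      v r 2 ^ 2 * h3f m r ^ 2 = (v r 0 * h1f m r + v r 2 * h3f m r) ^ 2 by ring, Real.sqrt_sq hc]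
  have hre : (tang m v r).re = v r 1 := by simp [tang]
  have him : (tang m v r).im = h1f m r * v r 2 - h3f m r * v r 0 := by simp [tang]
  have hh := h1f_sq_add_h3f_sq m hr
  ext i
  rw [hg, Vrho, hre, him]
  fin_cases i
  · simp [hProf, jHat]
    linear_combination (-v r 0) * hh
  · simp [hProf, jHat]
  · simp [hProf, jHat]
    linear_combination (-v r 2) * hh

theorem ae_xDen_le (h : InSigma m v dv) (hd : ∀ r, 0 < r → hdist m v r ≤ 2) :
    ∀ᵐ r ∂(volume.restrict (Ioi (0:ℝ))), xDen (tang m v) (dtang m v dv) r ≤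
      hdist m v r * ((10 * (m:ℝ) ^ 2 + 1) / r) + 4 * defect m v dv r := by
  filter_upwards [h.ae_resid, ae_restrict_mem measurableSet_Ioi] with r hr hr0
  have hr0 : (0:ℝ) < r := hr0
  obtain ⟨hr1, hr2⟩ := hr
  have hv := h.nsq3_eq hr0
  have hh := h1f_sq_add_h3f_sq m hr0
  have hP := h.hdist_eq hr0
  have hP0 := h.hdist_nonneg hr0
  have hP2 := hd r hr0
  have hdef : hdist m v r = 2 - 2 * (v r 0 * h1f m r + v r 2 * h3f m r) := rfl
  have e0 : dv r 0 = resid m v dv r 0 - m / r * (v r 2 * v r 0) := by simp [resid, kHat]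
  have e1 : dv r 1 = resid m v dv r 1 - m / r * (v r 2 * v r 1) := by simp [resid, kHat]
  have e2 : dv r 2 = resid m v dv r 2 + m / r * (1 - v r 2 * v r 2) := by simp [resid, kHat]
  have hz : ‖tang m v r‖ ^ 2 ≤ hdist m v r := by
    rw [h.norm_tang_sq hr0, hdef]
    nlinarith [sq_nonneg (1 - (v r 0 * h1f m r + v r 2 * h3f m r))]
  have hz2 : v r 1 ^ 2 + (h1f m r * v r 2 - h3f m r * v r 0) ^ 2 ≤ hdist m v r := by
    rwa [tang, norm_sq_add_mul_I] at hz
  have him : dtangIm m v dv r = m / r * (h1f m r * (hdist m v r / 2) -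
      v r 2 * (h1f m r * v r 2 - h3f m r * v r 0)) +
      (h1f m r * resid m v dv r 2 - h3f m r * resid m v dv r 0) := by
    rw [dtangIm, e0, e2, hdef]; ring
  have hdz : ‖dtang m v dv r‖ ^ 2 ≤ 10 * (m / r) ^ 2 * hdist m v r +
      4 * (resid m v dv r 0 ^ 2 + resid m v dv r 1 ^ 2 + resid m v dv r 2 ^ 2) := by
    rw [dtang, norm_sq_add_mul_I, him, e1]
    generalize resid m v dv r 0 = w0
    generalize resid m v dv r 1 = w1
    generalize resid m v dv r 2 = w2
    generalize hdist m v r = P at *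
    generalize hy : h1f m r * v r 2 - h3f m r * v r 0 = y at *
    have hu2 : v r 2 ^ 2 ≤ 1 := by nlinarith [sq_nonneg (v r 0), sq_nonneg (v r 1)]
    have hh1 : h1f m r ^ 2 ≤ 1 := by nlinarith [sq_nonneg (h3f m r)]
    have b1 : (v r 2 * v r 1) ^ 2 ≤ P := by
      rw [mul_pow]
      linarith [mul_le_mul_of_nonneg_right hu2 (sq_nonneg (v r 1)), sq_nonneg y]
    have b2 : (h1f m r * (P / 2)) ^ 2 ≤ P := by
      have hPP : (P / 2) ^ 2 ≤ P := by nlinarith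
      rw [mul_pow]
      linarith [mul_le_mul_of_nonneg_right hh1 (sq_nonneg (P / 2))]
    have b3 : (v r 2 * y) ^ 2 ≤ P := by
      rw [mul_pow]
      linarith [mul_le_mul_of_nonneg_right hu2 (sq_nonneg y), sq_nonneg (v r 1)]
    have b4 : (h1f m r * (P / 2) - v r 2 * y) ^ 2 ≤ 4 * P := by
      linarith [sub_sq_le (h1f m r * (P / 2)) (v r 2 * y)]
    have b5 : (h1f m r * w2 - h3f m r * w0) ^ 2 ≤ w0 ^ 2 + w2 ^ 2 := by
      have : (h1f m r * w2 - h3f m r * w0) ^ 2 + (h1f m r * w0 + h3f m r * w2) ^ 2 =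
        w0 ^ 2 + w2 ^ 2 := by linear_combination (w0 ^ 2 + w2 ^ 2) * hh
      linarith [sq_nonneg (h1f m r * w0 + h3f m r * w2)]
    generalize h1f m r * (P / 2) - v r 2 * y = A at *
    generalize h1f m r * w2 - h3f m r * w0 = B at *
    generalize v r 2 * v r 1 = E at *
    generalize (m:ℝ) / r = q at *
    have c1 : q ^ 2 * E ^ 2 ≤ q ^ 2 * P := mul_le_mul_of_nonneg_left b1 (sq_nonneg q)
    have c2 : q ^ 2 * A ^ 2 ≤ q ^ 2 * (4 * P) := mul_le_mul_of_nonneg_left b4 (sq_nonneg q)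
    have d1 := sub_sq_le w1 (q * E)
    have d2 := add_sq_le (a := q * A) (b := B)
    rw [mul_pow] at d1 d2
    linarith [sq_nonneg w0, sq_nonneg w1, sq_nonneg w2]
  rw [hr1, xDen]
  have e5 : hdist m v r * ((10 * (m:ℝ) ^ 2 + 1) / r) = 10 * (m / r) ^ 2 * hdist m v r * r +
      hdist m v r / r ^ 2 * r := by field_simp
  have e6 : ‖tang m v r‖ ^ 2 / r ^ 2 * r ≤ hdist m v r / r ^ 2 * r := by gcongr
  have e7 := mul_le_mul_of_nonneg_right hdz hr0.le
  rw [e5]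
  linarith

theorem xDen_bound (h : InSigma m v dv) (hm : 1 ≤ m) (h1 : |v 1 2| ≤ 1 / (8 * m))
    (hE : energy m v dv / π - 4 * m ≤ 1 / 2) (hd : ∀ r, 0 < r → hdist m v r ≤ 2) :
    IntegrableOn (xDen (tang m v) (dtang m v dv)) (Ioi 0) ∧
    ∫ r in Ioi (0:ℝ), xDen (tang m v) (dtang m v dv) r ≤
      (10 * (m:ℝ) ^ 2 + 1) * (8 * hdist m v 1 + 32 * (energy m v dv / π - 4 * m)) +
        4 * (energy m v dv / π - 4 * m) := by
  have hnn : ∀ r, 0 < r → 0 ≤ xDen (tang m v) (dtang m v dv) r := by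
    intro r hr; rw [xDen]; positivity
  have hdom : ∀ a b : ℝ, 0 < a → a ≤ b → IntervalIntegrable (fun r =>
      hdist m v r * ((10 * (m:ℝ) ^ 2 + 1) / r) + 4 * defect m v dv r) volume a b :=
    fun a b ha hab => (h.intervalIntegrable_hdist_div _ ha hab).add
      ((h.intervalIntegrable_defect ha hab).const_mul 4)
  have hle : ∀ a b : ℝ, 0 < a → ∀ᵐ r ∂(volume.restrict (Ioc a b)),
      xDen (tang m v) (dtang m v dv) r ≤
      hdist m v r * ((10 * (m:ℝ) ^ 2 + 1) / r) + 4 * defect m v dv r := fun a b ha =>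
    ae_restrict_of_ae_restrict_of_subset (fun x hx => ha.trans hx.1) (h.ae_xDen_le hd)
  have hii : ∀ a b : ℝ, 0 < a → a ≤ b →
      IntervalIntegrable (xDen (tang m v) (dtang m v dv)) volume a b := by
    intro a b ha hab
    rw [intervalIntegrable_iff_integrableOn_Ioc_of_le hab]
    have hsub : Ioc a b ⊆ Ioi 0 := fun x hx => ha.trans hx.1
    refine Integrable.mono' ((intervalIntegrable_iff_integrableOn_Ioc_of_le hab).1
      (hdom a b ha hab)) ?_ ?_
    · have m1 : AEStronglyMeasurable (dtang m v dv) (volume.restrict (Ioc a b)) :=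
        (h.locACC_tang.1 a b ha hab).1.aestronglyMeasurable
      have m2 : ContinuousOn (fun r => ‖tang m v r‖ ^ 2 / r ^ 2) (Ioi 0) := by
        refine ContinuousOn.div (ContinuousOn.pow (ContinuousOn.norm ?_) 2) (by fun_prop)
          fun x hx => pow_ne_zero 2 (ne_of_gt hx)
        exact (Complex.continuous_ofReal.comp_continuousOn (h.isLocAC 1).continuousOn).add
          ((Complex.continuous_ofReal.comp_continuousOn
            h.isLocAC_tangIm.continuousOn).mul continuousOn_const)
      exact ((m1.norm.pow 2).add ((m2.mono hsub).aestronglyMeasurable measurableSet_Ioc)).mul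
        continuous_id.aestronglyMeasurable
    · filter_upwards [hle a b ha, ae_restrict_mem measurableSet_Ioc] with r h3 hr
      rwa [Real.norm_of_nonneg (hnn r (ha.trans hr.1))]
  refine integrableOn_Ioi_of_intervalIntegral_le hii ?_ ?_
  · filter_upwards [ae_restrict_mem measurableSet_Ioi] with r hr using hnn r hr
  · intro a b ha ha1 hb
    have hab := ha1.trans hb
    have e1 : ∫ r in a..b, xDen (tang m v) (dtang m v dv) r ≤
        ∫ r in a..b, (hdist m v r * ((10 * (m:ℝ) ^ 2 + 1) / r) + 4 * defect m v dv r) := by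
      rw [intervalIntegral.integral_of_le hab, intervalIntegral.integral_of_le hab]
      exact setIntegral_mono_ae_restrict (hii a b ha hab).1 (hdom a b ha hab).1 (hle a b ha)
    refine e1.trans ?_
    rw [intervalIntegral.integral_add (h.intervalIntegrable_hdist_div _ ha hab)
      ((h.intervalIntegrable_defect ha hab).const_mul 4), intervalIntegral.integral_const_mul]
    have e2 : ∀ r, hdist m v r * ((10 * (m:ℝ) ^ 2 + 1) / r) =
      (10 * (m:ℝ) ^ 2 + 1) * (hdist m v r * (1 / r)) := fun r => by ring
    simp only [e2]
    rw [intervalIntegral.integral_const_mul]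
    exact add_le_add
      (mul_le_mul_of_nonneg_left (h.integral_hdist_le hm h1 hE ha ha1 hb) (by positivity))
      (mul_le_mul_of_nonneg_left (h.intervalIntegral_defect_le ha hab) (by norm_num))

end InSigma

/-- The profile `v` rescaled by `s` and rotated by `-α`. -/
def rescale (s α : ℝ) (v : ℝ → V3) (r : ℝ) : V3 := rotZ (-α) (v (s * r))

/-- The derivative of `rescale`. -/
def drescale (s α : ℝ) (dv : ℝ → V3) (r : ℝ) : V3 := fun i => s * rotZ (-α) (dv (s * r)) i

theorem nsq3_rotZ (α : ℝ) (a : V3) : nsq3 (rotZ α a) = nsq3 a := by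
  simp [nsq3, rotZ]
  linear_combination (a 0 ^ 2 + a 1 ^ 2) * Real.sin_sq_add_cos_sq α

theorem rotZ_rotZ (α β : ℝ) (a : V3) : rotZ α (rotZ β a) = rotZ (α + β) a := by
  ext i
  fin_cases i <;> simp [rotZ, Real.cos_add, Real.sin_add] <;> ring

theorem rotZ_zero (a : V3) : rotZ 0 a = a := by
  ext i
  fin_cases i <;> simp [rotZ]

theorem continuous_rotZ (α : ℝ) : Continuous (rotZ α) := by
  refine continuous_pi fun i => ?_
  fin_cases i <;> simp [rotZ] <;> fun_prop

theorem rescale_apply_zero (s α : ℝ) (v : ℝ → V3) (r : ℝ) :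
    rescale s α v r 0 = Real.cos α * v (s * r) 0 + Real.sin α * v (s * r) 1 := by
  simp [rescale, rotZ]

theorem rescale_apply_one (s α : ℝ) (v : ℝ → V3) (r : ℝ) :
    rescale s α v r 1 = -Real.sin α * v (s * r) 0 + Real.cos α * v (s * r) 1 := by
  simp [rescale, rotZ]

theorem rescale_apply_two (s α : ℝ) (v : ℝ → V3) (r : ℝ) :
    rescale s α v r 2 = v (s * r) 2 := by
  simp [rescale, rotZ]

theorem eq_rotZ_rescale {s : ℝ} (hs : 0 < s) (α : ℝ) (v : ℝ → V3) (r : ℝ) :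
    v r = rotZ α (rescale s α v (r / s)) := by
  rw [rescale, rotZ_rotZ, mul_div_cancel₀ _ hs.ne', add_neg_cancel, rotZ_zero]

theorem eDen_rescale (m : ℕ) {s : ℝ} (hs : 0 < s) (α : ℝ) (v dv : ℝ → V3) (r : ℝ) :
    eDen m (rescale s α v) (drescale s α dv) r = s * eDen m v dv (s * r) := by
  have h1 : nsq3 (drescale s α dv r) = s ^ 2 * nsq3 (dv (s * r)) := by
    rw [← nsq3_rotZ (-α) (dv (s * r))]
    simp only [nsq3, drescale]; ring
  have h2 : rescale s α v r 0 ^ 2 + rescale s α v r 1 ^ 2 = v (s * r) 0 ^ 2 + v (s * r) 1 ^ 2 := by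
    rw [rescale_apply_zero, rescale_apply_one]
    linear_combination (v (s * r) 0 ^ 2 + v (s * r) 1 ^ 2) * Real.sin_sq_add_cos_sq α
  rw [eDen, eDen, h1, h2]
  rcases eq_or_ne r 0 with rfl | hr
  · simp
  · field_simp

theorem energy_rescale (m : ℕ) {s : ℝ} (hs : 0 < s) (α : ℝ) (v dv : ℝ → V3) :
    energy m (rescale s α v) (drescale s α dv) = energy m v dv := by
  simp only [energy, eDen_rescale m hs]
  rw [integral_const_mul, integral_comp_mul_left_Ioi (eDen m v dv) 0 hs, mul_zero, smul_eq_mul,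
    ← mul_assoc s, mul_inv_cancel₀ hs.ne', one_mul]

theorem IsLocAC.comp_mul_left {f f' : ℝ → ℝ} (hf : IsLocAC f f') {s : ℝ} (hs : 0 < s) :
    IsLocAC (fun r => f (s * r)) (fun r => s * f' (s * r)) := by
  intro a b ha hab
  have ha' : 0 < s * a := mul_pos hs ha
  have hab' : s * a ≤ s * b := mul_le_mul_of_nonneg_left hab hs.le
  have hi : IntervalIntegrable (fun r => f' (s * r)) volume a b := by
    have := (hf.intervalIntegrable ha' hab').comp_mul_left (c := s)
    simpa [hs.ne'] using this
  refine ⟨hi.const_mul s, ?_⟩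
  rw [intervalIntegral.integral_const_mul, ← smul_eq_mul,
    intervalIntegral.smul_integral_comp_mul_left, hf.integral_eq ha' hab']

theorem InSigma.rescaled {m : ℕ} {v dv : ℝ → V3} (h : InSigma m v dv) {s : ℝ} (hs : 0 < s)
    (α : ℝ) : InSigma m (rescale s α v) (drescale s α dv) := by
  have hac : ∀ i, IsLocAC (fun r => rescale s α v r i) (fun r => drescale s α dv r i) := by
    have h0 := (h.isLocAC 0).comp_mul_left hs
    have h1 := (h.isLocAC 1).comp_mul_left hs
    have h2 := (h.isLocAC 2).comp_mul_left hs
    intro i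
    fin_cases i
    · convert! (h0.const_mul (Real.cos α)).add (h1.const_mul (Real.sin α)) using 2 with r r
      · simp [rescale_apply_zero]
      · simp [drescale, rotZ]; ring
    · convert! (h0.const_mul (-Real.sin α)).add (h1.const_mul (Real.cos α)) using 2 with r r
      · simp [rescale_apply_one]
      · simp [drescale, rotZ]; ring
    · exact h2
  have hk : ∀ c : ℝ, rotZ (-α) ![0, 0, c] = ![0, 0, c] := by
    intro c; ext i; fin_cases i <;> simp [rotZ]
  refine ⟨⟨fun a b ha hab i => (hac i a b ha hab).1, fun a b ha hab i => (hac i a b ha hab).2⟩,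
    fun r hr => ?_, ?_, ?_, ?_⟩
  · rw [rescale, nsq3_rotZ]
    exact h.2.1 _ (mul_pos hs hr)
  · have := (integrableOn_Ioi_comp_mul_left_iff (eDen m v dv) 0 hs).2 (by simpa using h.2.2.1)
    refine (this.const_mul s).congr ?_
    exact Eventually.of_forall fun r => (eDen_rescale m hs α v dv r).symm
  · have h1 : Tendsto (fun r => s * r) (nhdsWithin 0 (Ioi 0)) (nhdsWithin 0 (Ioi 0)) := by
      refine tendsto_nhdsWithin_iff.2 ⟨?_, ?_⟩
      · have : Tendsto (fun r => s * r) (nhds 0) (nhds (s * 0)) :=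
          (continuous_const_mul s).tendsto 0
        rw [mul_zero] at this
        exact this.mono_left nhdsWithin_le_nhds
      · filter_upwards [self_mem_nhdsWithin] with r hr using mul_pos hs hr
    have h2 := ((continuous_rotZ (-α)).tendsto negkHat).comp (h.2.2.2.1.comp h1)
    rwa [show rotZ (-α) negkHat = negkHat from hk (-1)] at h2
  · have h1 : Tendsto (fun r => s * r) atTop atTop := tendsto_id.const_mul_atTop hs
    have h2 := ((continuous_rotZ (-α)).tendsto kHat).comp (h.2.2.2.2.comp h1)
    rwa [show rotZ (-α) kHat = kHat from hk 1] at h2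

/-- The weighted average of a dilate of `f` against the weight `g`. -/
def dilAvg (f g : ℝ → ℝ) (s : ℝ) : ℝ := ∫ ρ in Ioi (0:ℝ), f (s * ρ) * g ρ

theorem continuousOn_comp_mul_left {f : ℝ → ℝ} (hf : ContinuousOn f (Ioi 0)) {s : ℝ} (hs : 0 < s) :
    ContinuousOn (fun ρ => f (s * ρ)) (Ioi 0) :=
  hf.comp (continuous_const_mul s).continuousOn fun _ hρ => mul_pos hs hρ

theorem aestronglyMeasurable_dilate {f g : ℝ → ℝ} (hf : ContinuousOn f (Ioi 0))
    (hg : IntegrableOn g (Ioi 0)) {s : ℝ} (hs : 0 < s) :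
    AEStronglyMeasurable (fun ρ => f (s * ρ) * g ρ) (volume.restrict (Ioi (0:ℝ))) :=
  ((continuousOn_comp_mul_left hf hs).aestronglyMeasurable measurableSet_Ioi).mul hg.1

theorem integrableOn_dilate {f g : ℝ → ℝ} (hf : ContinuousOn f (Ioi 0))
    (hb : ∀ r, 0 < r → |f r| ≤ 1) (hg : IntegrableOn g (Ioi 0)) {s : ℝ} (hs : 0 < s) :
    IntegrableOn (fun ρ => f (s * ρ) * g ρ) (Ioi 0) := by
  refine Integrable.mono' hg.norm (aestronglyMeasurable_dilate hf hg hs) ?_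
  filter_upwards [ae_restrict_mem measurableSet_Ioi] with ρ hρ
  rw [norm_mul]
  exact mul_le_of_le_one_left (norm_nonneg _) (hb _ (mul_pos hs hρ))

theorem continuousOn_dilAvg {f g : ℝ → ℝ} (hf : ContinuousOn f (Ioi 0))
    (hb : ∀ r, 0 < r → |f r| ≤ 1) (hg : IntegrableOn g (Ioi 0)) :
    ContinuousOn (dilAvg f g) (Ioi 0) := by
  refine continuousOn_of_dominated (bound := fun ρ => ‖g ρ‖)
    (fun s hs => aestronglyMeasurable_dilate hf hg hs) (fun s hs => ?_) hg.norm ?_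
  · filter_upwards [ae_restrict_mem measurableSet_Ioi] with ρ hρ
    rw [norm_mul]
    exact mul_le_of_le_one_left (norm_nonneg _) (hb _ (mul_pos hs hρ))
  · filter_upwards [ae_restrict_mem measurableSet_Ioi] with ρ hρ
    exact (hf.comp (continuous_mul_const ρ).continuousOn fun s (hs : 0 < s) => mul_pos hs hρ).mul
      continuousOn_const

theorem abs_setIntegral_le_of_abs_le {F g : ℝ → ℝ} {c : ℝ} (hg : IntegrableOn g (Ioi 0))
    (h : ∀ ρ, 0 < ρ → |F ρ| ≤ c * g ρ) :
    |∫ ρ in Ioi (0:ℝ), F ρ| ≤ c * ∫ ρ in Ioi (0:ℝ), g ρ := by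
  rw [← integral_const_mul, ← Real.norm_eq_abs]
  refine norm_integral_le_of_norm_le (hg.const_mul c) ?_
  filter_upwards [ae_restrict_mem measurableSet_Ioi] with ρ hρ using h ρ hρ

theorem abs_dilAvg_le {f g g₀ : ℝ → ℝ} {c : ℝ} (hc : 0 ≤ c) (hb : ∀ r, 0 < r → |f r| ≤ c)
    (hg₀ : IntegrableOn g₀ (Ioi 0)) (hgg : ∀ ρ, 0 < ρ → |g ρ| ≤ g₀ ρ) {s : ℝ} (hs : 0 < s) :
    |dilAvg f g s| ≤ c * ∫ ρ in Ioi (0:ℝ), g₀ ρ := by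
  refine abs_setIntegral_le_of_abs_le hg₀ fun ρ hρ => ?_
  rw [abs_mul]
  exact mul_le_mul (hb _ (mul_pos hs hρ)) (hgg ρ hρ) (abs_nonneg _) hc

theorem abs_dilAvg_sub_le {f f' g g₀ : ℝ → ℝ} {c : ℝ} (hc : 0 ≤ c)
    (hf : ContinuousOn f (Ioi 0)) (hf' : ContinuousOn f' (Ioi 0))
    (hb : ∀ r, 0 < r → |f r| ≤ 1) (hb' : ∀ r, 0 < r → |f' r| ≤ 1)
    (hff : ∀ r, 0 < r → |f r - f' r| ≤ c) (hg : IntegrableOn g (Ioi 0))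
    (hg₀ : IntegrableOn g₀ (Ioi 0)) (hgg : ∀ ρ, 0 < ρ → |g ρ| ≤ g₀ ρ) {s : ℝ} (hs : 0 < s) :
    |dilAvg f g s - dilAvg f' g s| ≤ c * ∫ ρ in Ioi (0:ℝ), g₀ ρ := by
  have h := abs_dilAvg_le (f := fun r => f r - f' r) hc hff hg₀ hgg hs
  rwa [dilAvg, show (fun ρ => (f (s * ρ) - f' (s * ρ)) * g ρ) =
    fun ρ => f (s * ρ) * g ρ - f' (s * ρ) * g ρ from funext fun ρ => sub_mul _ _ _,
    integral_sub (integrableOn_dilate hf hb hg hs) (integrableOn_dilate hf' hb' hg hs)] at h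

/-- The weight `h₁(ρ) ρ` of the orthogonality condition. -/
def wt (m : ℕ) (ρ : ℝ) : ℝ := h1f m ρ * ρ

theorem wt_pos (m : ℕ) {ρ : ℝ} (hρ : 0 < ρ) : 0 < wt m ρ := mul_pos (h1f_pos m hρ) hρ

theorem wt_le {m : ℕ} (hm : 3 ≤ m) {ρ : ℝ} (hρ : 0 < ρ) : wt m ρ ≤ 4 * (1 + ρ ^ 2)⁻¹ := by
  rw [wt, h1f_eq m hρ, div_mul_eq_mul_div, ← div_eq_mul_inv,
    div_le_div_iff₀ (by positivity) (by positivity)]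
  rcases le_total ρ 1 with h | h
  · have h1 : ρ ^ m ≤ 1 := pow_le_one₀ hρ.le h
    have h2 : ρ ^ m * ρ ≤ 1 := mul_le_one₀ h1 hρ.le h
    nlinarith [sq_nonneg (ρ ^ m), pow_le_one₀ hρ.le h (n := 2), pow_pos hρ m, pow_pos hρ 2,
      mul_pos (pow_pos hρ m) hρ]
  · have h1 : ρ ^ 3 ≤ ρ ^ m := pow_le_pow_right₀ h hm
    have h2 : ρ * (1 + ρ ^ 2) ≤ 2 * ρ ^ m := by nlinarith [mul_nonneg hρ.le (sub_nonneg.2 h)]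
    nlinarith [mul_le_mul_of_nonneg_left h2 (pow_pos hρ m).le]

theorem continuousOn_wt (m : ℕ) : ContinuousOn (wt m) (Ioi 0) :=
  (continuousOn_h1f m).mul continuousOn_id

theorem integrableOn_wt {m : ℕ} (hm : 3 ≤ m) : IntegrableOn (wt m) (Ioi 0) := by
  refine Integrable.mono' (integrable_inv_one_add_sq.integrableOn.const_mul 4)
    ((continuousOn_wt m).aestronglyMeasurable measurableSet_Ioi) ?_
  filter_upwards [ae_restrict_mem measurableSet_Ioi] with ρ hρ
  rw [Real.norm_of_nonneg (wt_pos m hρ).le]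
  exact wt_le hm hρ

theorem abs_h1f_le_one (m : ℕ) {r : ℝ} (hr : 0 < r) : |h1f m r| ≤ 1 := by
  rw [abs_of_pos (h1f_pos m hr)]; exact h1f_le_one m hr

theorem integrableOn_mul_wt {m : ℕ} (hm : 3 ≤ m) {f : ℝ → ℝ} (hf : ContinuousOn f (Ioi 0))
    (hb : ∀ r, 0 < r → |f r| ≤ 1) : IntegrableOn (fun ρ => f ρ * wt m ρ) (Ioi 0) := by
  simpa using integrableOn_dilate hf hb (integrableOn_wt hm) one_pos

theorem abs_mul_wt_le (m : ℕ) {f : ℝ → ℝ} (hb : ∀ r, 0 < r → |f r| ≤ 1) {ρ : ℝ} (hρ : 0 < ρ) :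
    |f ρ * wt m ρ| ≤ wt m ρ := by
  rw [abs_mul, abs_of_pos (wt_pos m hρ)]
  exact mul_le_of_le_one_left (wt_pos m hρ).le (hb ρ hρ)

theorem le_h1f (m : ℕ) {r : ℝ} (h1 : 1 / 2 ≤ r) (h2 : r ≤ 4) : (1 / 4 : ℝ) ^ m ≤ h1f m r := by
  have hr : 0 < r := by linarith
  have hp : 0 < r ^ m := pow_pos hr m
  have a : r ^ m ≤ 4 ^ m := pow_le_pow_left₀ hr.le h2 m
  have b : (1:ℝ) ≤ r ^ m * 4 ^ m := by
    rw [← mul_pow]; exact one_le_pow₀ (by linarith)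
  rw [h1f_eq m hr, one_div, inv_pow, inv_eq_one_div,
    div_le_div_iff₀ (by positivity) (by positivity)]
  nlinarith

theorem h3f_mul_h1f_sub (m : ℕ) {s ρ : ℝ} (hs : 0 < s) (hρ : 0 < ρ) :
    h3f m (s * ρ) * h1f m ρ - h1f m (s * ρ) * h3f m ρ =
      h1f m (s * ρ) * h1f m ρ *
        ((s ^ m - 1) * ((s ^ m * (ρ ^ m) ^ 2 + 1) / (2 * s ^ m * ρ ^ m))) := by
  have hp : 0 < ρ ^ m := pow_pos hρ m
  have hq : 0 < s ^ m := pow_pos hs m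
  rw [h1f_eq m hρ, h3f_eq m hρ, h1f_eq m (mul_pos hs hρ), h3f_eq m (mul_pos hs hρ), mul_pow]
  field_simp
  ring

theorem sq_sub_one_le {m : ℕ} (hm : 1 ≤ m) {s : ℝ} (hs : 0 < s) :
    (s - 1) ^ 2 ≤ (s - 1) * (s ^ m - 1) := by
  rcases le_total 1 s with h | h
  · have := le_self_pow₀ h (show m ≠ 0 by omega)
    nlinarith
  · have := pow_le_of_le_one hs.le h (show m ≠ 0 by omega)
    nlinarith

theorem le_setIntegral_Ioi {G : ℝ → ℝ} {k : ℝ} (hG : IntegrableOn G (Ioi 0))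
    (h0 : ∀ ρ, 0 < ρ → 0 ≤ G ρ) (h1 : ∀ ρ, 1 < ρ → ρ ≤ 2 → k ≤ G ρ) :
    k ≤ ∫ ρ in Ioi (0:ℝ), G ρ := by
  have hsub : Ioc (1:ℝ) 2 ⊆ Ioi 0 := fun x hx => lt_trans one_pos hx.1
  have h2 : ∫ _ in Ioc (1:ℝ) 2, k ≤ ∫ ρ in Ioc (1:ℝ) 2, G ρ :=
    setIntegral_mono_on (by simp) (hG.mono_set hsub) measurableSet_Ioc
      fun ρ hρ => h1 ρ hρ.1 hρ.2
  have h3 : ∫ ρ in Ioc (1:ℝ) 2, G ρ ≤ ∫ ρ in Ioi (0:ℝ), G ρ := by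
    refine setIntegral_mono_set hG ?_ hsub.eventuallyLE
    filter_upwards [ae_restrict_mem measurableSet_Ioi] with ρ hρ using h0 ρ hρ
  have h4 : ∫ _ in Ioc (1:ℝ) 2, k = k := by norm_num
  linarith

theorem le_wt (m : ℕ) {ρ : ℝ} (h1 : 1 < ρ) (h2 : ρ ≤ 2) : (1 / 4 : ℝ) ^ m ≤ wt m ρ := by
  have := le_h1f m (r := ρ) (by linarith) (by linarith)
  rw [wt]
  nlinarith [h1f_pos m (r := ρ) (by linarith)]

theorem le_dilAvg_h1f {m : ℕ} (hm : 3 ≤ m) {s : ℝ} (h1 : 1 / 2 ≤ s) (h2 : s ≤ 2) :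
    ((1 / 4 : ℝ) ^ m) ^ 2 ≤ dilAvg (h1f m) (wt m) s := by
  have hs : 0 < s := by linarith
  refine le_setIntegral_Ioi (integrableOn_dilate (continuousOn_h1f m)
    (fun r hr => abs_h1f_le_one m hr) (integrableOn_wt hm) hs)
    (fun ρ hρ => (mul_pos (h1f_pos m (mul_pos hs hρ)) (wt_pos m hρ)).le) fun ρ hρ1 hρ2 => ?_
  rw [sq]
  exact mul_le_mul (le_h1f m (by nlinarith) (by nlinarith)) (le_wt m hρ1 hρ2) (by positivity)
    (h1f_pos m (mul_pos hs (by linarith))).le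

theorem le_mul_dilAvg_sub {m : ℕ} (hm : 3 ≤ m) {s : ℝ} (h1 : 1 / 2 ≤ s) (h2 : s ≤ 2) :
    ((1 / 4 : ℝ) ^ m) ^ 3 / 2 * (s - 1) ^ 2 ≤
      (s - 1) * (dilAvg (h3f m) (fun ρ => h1f m ρ * wt m ρ) s -
        dilAvg (h1f m) (fun ρ => h3f m ρ * wt m ρ) s) := by
  have hs : 0 < s := by linarith
  have hq : 0 < s ^ m := pow_pos hs m
  have b1 : ∀ r, 0 < r → |h1f m r| ≤ 1 := fun r hr => abs_h1f_le_one m hr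
  have b3 : ∀ r, 0 < r → |h3f m r| ≤ 1 := fun r hr => abs_h3f_le_one m hr
  have i1 := integrableOn_dilate (continuousOn_h3f m) b3
    (integrableOn_mul_wt hm (continuousOn_h1f m) b1) hs
  have i2 := integrableOn_dilate (continuousOn_h1f m) b1
    (integrableOn_mul_wt hm (continuousOn_h3f m) b3) hs
  rw [dilAvg, dilAvg, ← integral_sub i1 i2, ← integral_const_mul]
  have key : ∀ ρ, 0 < ρ → (s - 1) * (h3f m (s * ρ) * (h1f m ρ * wt m ρ) -
      h1f m (s * ρ) * (h3f m ρ * wt m ρ)) = (h1f m (s * ρ) * h1f m ρ * wt m ρ) *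
        ((s - 1) * (s ^ m - 1) * ((s ^ m * (ρ ^ m) ^ 2 + 1) / (2 * s ^ m * ρ ^ m))) := by
    intro ρ hρ
    linear_combination (s - 1) * wt m ρ * h3f_mul_h1f_sub m hs hρ
  have hsq := sq_sub_one_le (m := m) (by omega) hs
  refine le_setIntegral_Ioi ((i1.sub i2).const_mul _) (fun ρ hρ => ?_) fun ρ hρ1 hρ2 => ?_
  · rw [key ρ hρ]
    have hp : 0 < ρ ^ m := pow_pos hρ m
    have := h1f_pos m (mul_pos hs hρ)
    have := h1f_pos m hρ
    have := wt_pos m hρ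
    have : 0 ≤ (s - 1) * (s ^ m - 1) := (sq_nonneg _).trans hsq
    positivity
  · have hρ : 0 < ρ := by linarith
    have hp : 1 ≤ ρ ^ m := one_le_pow₀ hρ1.le
    rw [key ρ hρ]
    have hc : 0 < (1 / 4 : ℝ) ^ m := by positivity
    have e1 := le_h1f m (r := s * ρ) (by nlinarith) (by nlinarith)
    have := h1f_pos m (mul_pos hs hρ)
    have := h1f_pos m hρ
    have := wt_pos m hρ
    have : 0 ≤ (s - 1) * (s ^ m - 1) := (sq_nonneg _).trans hsq
    have e2 := le_h1f m (r := ρ) (by linarith) (by linarith)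
    have e3 := le_wt m hρ1 hρ2
    have e4 : (1:ℝ) / 2 ≤ (s ^ m * (ρ ^ m) ^ 2 + 1) / (2 * s ^ m * ρ ^ m) := by
      rw [div_le_div_iff₀ (by positivity) (by positivity)]
      nlinarith [mul_le_mul_of_nonneg_left hp (mul_pos hq (pow_pos hρ m)).le]
    calc ((1 / 4 : ℝ) ^ m) ^ 3 / 2 * (s - 1) ^ 2
        = ((1 / 4 : ℝ) ^ m * (1 / 4) ^ m * (1 / 4) ^ m) * ((s - 1) ^ 2 * (1 / 2)) := by ring
      _ ≤ _ := by gcongr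

/-- An approximate version of a product identity, used with `x = F₁`, `y = F₂`. -/
theorem abs_norm_mul_sub_le {x y a b b' f a₀ b₀ η I : ℝ} (hη : 0 ≤ η) (hI : 0 ≤ I) (hf : 0 ≤ f)
    (hfI : f ≤ I) (hx : |x - f| ≤ η * I) (hy : |y| ≤ η * I) (ha : |a - a₀| ≤ η * I)
    (hb : |b - b₀| ≤ η * I) (haI : |a| ≤ I) (hbI : |b| ≤ I) (hbI' : |b'| ≤ I) :
    |√(x ^ 2 + y ^ 2) * a - (x * b + y * b') - f * (a₀ - b₀)| ≤ 6 * η * I ^ 2 := by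
  have hN : |√(x ^ 2 + y ^ 2) - f| ≤ 2 * (η * I) := by
    have h1 : |x| ≤ √(x ^ 2 + y ^ 2) := Real.abs_le_sqrt (by nlinarith [sq_nonneg y])
    have h2 : √(x ^ 2 + y ^ 2) ≤ |x| + |y| := by
      rw [Real.sqrt_le_left (by positivity)]
      nlinarith [sq_abs x, sq_abs y, abs_nonneg x, abs_nonneg y,
        mul_nonneg (abs_nonneg x) (abs_nonneg y)]
    have h3 : |x| ≤ |x - f| + f := by
      have := abs_add_le (x - f) f
      rwa [sub_add_cancel, abs_of_nonneg hf] at this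
    have h4 : f ≤ |x - f| + |x| := by
      have := abs_sub_abs_le_abs_sub f x
      rw [abs_of_nonneg hf, abs_sub_comm] at this; linarith
    rw [abs_le]; constructor <;> linarith
  have e : √(x ^ 2 + y ^ 2) * a - (x * b + y * b') - f * (a₀ - b₀) =
      (√(x ^ 2 + y ^ 2) - f) * a + f * (a - a₀) - (x - f) * b - f * (b - b₀) - y * b' := by ring
  have hηI : 0 ≤ η * I := mul_nonneg hη hI
  have p : ∀ {u w c d : ℝ}, |u| ≤ c → |w| ≤ d → 0 ≤ c → |u * w| ≤ c * d := fun hu hw hc => by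
    rw [abs_mul]; exact mul_le_mul hu hw (abs_nonneg _) hc
  have hf' : |f| ≤ I := by rwa [abs_of_nonneg hf]
  have p1 := abs_le.1 (p hN haI (by positivity))
  have p2 := abs_le.1 (p hf' ha hI)
  have p3 := abs_le.1 (p hx hbI hηI)
  have p4 := abs_le.1 (p hf' hb hI)
  have p5 := abs_le.1 (p hy hbI' hηI)
  rw [e, abs_le]
  constructor <;> nlinarith

theorem exists_polar (x y : ℝ) :
    ∃ α : ℝ, √(x ^ 2 + y ^ 2) * Real.cos α = x ∧ √(x ^ 2 + y ^ 2) * Real.sin α = y := by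
  have h : ‖(⟨x, y⟩ : ℂ)‖ = √(x ^ 2 + y ^ 2) := by
    rw [Complex.norm_def, Complex.normSq_apply, sq, sq]
  refine ⟨Complex.arg ⟨x, y⟩, ?_, ?_⟩ <;> rw [← h]
  · exact Complex.norm_mul_cos_arg _
  · exact Complex.norm_mul_sin_arg _

/-- The constant controlling the correction of the scale in terms of the distance to `h`. -/
def scaleConst (m : ℕ) : ℝ :=
  12 * (∫ ρ in Ioi (0:ℝ), wt m ρ) ^ 2 / ((1 / 4 : ℝ) ^ m) ^ 5

/-- The constant controlling the correction of the angle in terms of the distance to `h`. -/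
def angleConst (m : ℕ) : ℝ := 2 * (∫ ρ in Ioi (0:ℝ), wt m ρ) / ((1 / 4 : ℝ) ^ m) ^ 2

theorem integral_wt_nonneg (m : ℕ) : 0 ≤ ∫ ρ in Ioi (0:ℝ), wt m ρ :=
  setIntegral_nonneg measurableSet_Ioi fun _ hρ => (wt_pos m hρ).le

namespace InSigma

variable {m : ℕ} {v dv : ℝ → V3}

theorem abs_apply_le_one (h : InSigma m v dv) (i : Fin 3) {r : ℝ} (hr : 0 < r) : |v r i| ≤ 1 := by
  have := h.nsq3_eq hr
  rw [abs_le_one_iff_mul_self_le_one]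
  fin_cases i <;> simp only [Fin.zero_eta, Fin.mk_one, Fin.reduceFinMk] <;>
    nlinarith [sq_nonneg (v r 0), sq_nonneg (v r 1), sq_nonneg (v r 2)]

theorem exists_third_eq_zero (h : InSigma m v dv) : ∃ r : ℝ, 0 < r ∧ v r 2 = 0 := by
  have t0 : Tendsto (fun c => v c 2) (nhdsWithin 0 (Ioi 0)) (nhds (-1)) := by
    have := ((continuous_apply (2 : Fin 3)).tendsto negkHat).comp h.2.2.2.1
    simpa [negkHat, Function.comp_def] using this
  have t1 : Tendsto (fun c => v c 2) atTop (nhds 1) := by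
    have := ((continuous_apply (2 : Fin 3)).tendsto kHat).comp h.2.2.2.2
    simpa [kHat, Function.comp_def] using this
  obtain ⟨a, ha, ha0⟩ := ((t0.eventually_lt_const (show (-1:ℝ) < 0 by norm_num)).and
    self_mem_nhdsWithin).exists
  obtain ⟨b, hb, hb0⟩ := ((t1.eventually_const_lt (show (0:ℝ) < 1 by norm_num)).and
    (eventually_gt_atTop 0)).exists
  have := isPreconnected_Ioi.intermediate_value (a := a) (b := b) ha0 hb0
    (h.isLocAC 2).continuousOn
  obtain ⟨r, hr, hr0⟩ := this ⟨ha.le, hb.le⟩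
  exact ⟨r, hr, hr0⟩

theorem exists_rescale_one (h : InSigma m v dv) : ∃ s α : ℝ, 0 < s ∧
    rescale s α v 1 0 = 1 ∧ rescale s α v 1 1 = 0 ∧
      rescale s α v 1 2 = 0 := by
  obtain ⟨s, hs, h2⟩ := h.exists_third_eq_zero
  obtain ⟨α, hc, hsn⟩ := exists_polar (v s 0) (v s 1)
  have hn := h.nsq3_eq hs
  rw [h2] at hn
  rw [show v s 0 ^ 2 + v s 1 ^ 2 = 1 by linarith, Real.sqrt_one, one_mul] at hc hsn
  refine ⟨s, α, hs, ?_, ?_, ?_⟩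
  · rw [rescale_apply_zero, mul_one, hc, hsn]; linarith
  · rw [rescale_apply_one, mul_one, hc, hsn]; ring
  · rw [rescale_apply_two, mul_one, h2]

theorem dilAvg_gap (h : InSigma m v dv) (hm : 3 ≤ m) {η : ℝ} (hη : 0 ≤ η)
    (hd : ∀ r, 0 < r → hdist m v r ≤ η ^ 2) {s : ℝ} (h1 : 1 / 2 ≤ s) (h2 : s ≤ 2) :
    |dilAvg (fun r => v r 0) (wt m) s - dilAvg (h1f m) (wt m) s| ≤
        η * ∫ ρ in Ioi (0:ℝ), wt m ρ ∧
    |dilAvg (fun r => v r 1) (wt m) s| ≤ η * ∫ ρ in Ioi (0:ℝ), wt m ρ ∧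
    |√(dilAvg (fun r => v r 0) (wt m) s ^ 2 + dilAvg (fun r => v r 1) (wt m) s ^ 2) *
          dilAvg (fun r => v r 2) (fun ρ => h1f m ρ * wt m ρ) s -
        (dilAvg (fun r => v r 0) (wt m) s *
            dilAvg (fun r => v r 0) (fun ρ => h3f m ρ * wt m ρ) s +
          dilAvg (fun r => v r 1) (wt m) s *
            dilAvg (fun r => v r 1) (fun ρ => h3f m ρ * wt m ρ) s) -
        dilAvg (h1f m) (wt m) s * (dilAvg (h3f m) (fun ρ => h1f m ρ * wt m ρ) s -
          dilAvg (h1f m) (fun ρ => h3f m ρ * wt m ρ) s)| ≤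
      6 * η * (∫ ρ in Ioi (0:ℝ), wt m ρ) ^ 2 := by
  have hs : 0 < s := by linarith
  have b1 : ∀ r, 0 < r → |h1f m r| ≤ 1 := fun r hr => abs_h1f_le_one m hr
  have b3 : ∀ r, 0 < r → |h3f m r| ≤ 1 := fun r hr => abs_h3f_le_one m hr
  have hw := integrableOn_wt hm
  have i1 := integrableOn_mul_wt hm (continuousOn_h1f m) b1
  have i3 := integrableOn_mul_wt hm (continuousOn_h3f m) b3
  have hb : ∀ i, ∀ r, 0 < r → |v r i| ≤ 1 := fun i r hr => h.abs_apply_le_one i hr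
  have hcl : ∀ r, 0 < r → |v r 0 - h1f m r| ≤ η ∧ |v r 1| ≤ η ∧ |v r 2 - h3f m r| ≤ η := by
    intro r hr
    have := hd r hr
    rw [h.hdist_eq hr] at this
    refine ⟨abs_le_of_sq_le_sq ?_ hη, abs_le_of_sq_le_sq ?_ hη, abs_le_of_sq_le_sq ?_ hη⟩ <;>
      nlinarith [sq_nonneg (v r 0 - h1f m r), sq_nonneg (v r 1), sq_nonneg (v r 2 - h3f m r)]
  have habs : ∀ ρ, 0 < ρ → |wt m ρ| ≤ wt m ρ := fun ρ hρ => (abs_of_pos (wt_pos m hρ)).le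
  have habs1 : ∀ ρ, 0 < ρ → |h1f m ρ * wt m ρ| ≤ wt m ρ := fun ρ hρ => abs_mul_wt_le m b1 hρ
  have habs3 : ∀ ρ, 0 < ρ → |h3f m ρ * wt m ρ| ≤ wt m ρ := fun ρ hρ => abs_mul_wt_le m b3 hρ
  have hx := abs_dilAvg_sub_le hη (h.isLocAC 0).continuousOn (continuousOn_h1f m) (hb 0) b1
    (fun r hr => (hcl r hr).1) hw hw habs hs
  have hy := abs_dilAvg_le hη (fun r hr => (hcl r hr).2.1) hw habs hs
  have ha := abs_dilAvg_sub_le hη (h.isLocAC 2).continuousOn (continuousOn_h3f m) (hb 2) b3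
    (fun r hr => (hcl r hr).2.2) i1 hw habs1 hs
  have hb0 := abs_dilAvg_sub_le hη (h.isLocAC 0).continuousOn (continuousOn_h1f m) (hb 0) b1
    (fun r hr => (hcl r hr).1) i3 hw habs3 hs
  have hf := (sq_nonneg _).trans (le_dilAvg_h1f hm h1 h2)
  have hfI := (le_abs_self _).trans (abs_dilAvg_le zero_le_one b1 hw habs hs)
  have haI := abs_dilAvg_le zero_le_one (hb 2) hw habs1 hs
  have hbI := abs_dilAvg_le zero_le_one (hb 0) hw habs3 hs
  have hbI' := abs_dilAvg_le zero_le_one (hb 1) hw habs3 hs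
  rw [one_mul] at hfI haI hbI hbI'
  exact ⟨hx, hy, abs_norm_mul_sub_le hη (integral_wt_nonneg m) hf hfI hx hy ha hb0 haI hbI hbI'⟩

theorem exists_scale (h : InSigma m v dv) (hm : 3 ≤ m) {η : ℝ} (hη : 0 ≤ η)
    (hd : ∀ r, 0 < r → hdist m v r ≤ η ^ 2) (hK : scaleConst m * η ≤ 1 / 2) :
    ∃ s : ℝ, |s - 1| ≤ scaleConst m * η ∧
      √(dilAvg (fun r => v r 0) (wt m) s ^ 2 + dilAvg (fun r => v r 1) (wt m) s ^ 2) *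
          dilAvg (fun r => v r 2) (fun ρ => h1f m ρ * wt m ρ) s -
        (dilAvg (fun r => v r 0) (wt m) s *
            dilAvg (fun r => v r 0) (fun ρ => h3f m ρ * wt m ρ) s +
          dilAvg (fun r => v r 1) (wt m) s *
            dilAvg (fun r => v r 1) (fun ρ => h3f m ρ * wt m ρ) s) = 0 := by
  set c : ℝ := (1 / 4 : ℝ) ^ m with hc
  have hc0 : 0 < c := by positivity
  set I := ∫ ρ in Ioi (0:ℝ), wt m ρ with hI
  have hKc : scaleConst m * c ^ 5 = 12 * I ^ 2 := by
    rw [scaleConst, ← hc, ← hI, div_mul_cancel₀ _ (by positivity)]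
  have hK0 : 0 ≤ scaleConst m := by rw [scaleConst]; positivity
  set t := scaleConst m * η with ht
  have ht0 : 0 ≤ t := mul_nonneg hK0 hη
  set G : ℝ → ℝ := fun s =>
    √(dilAvg (fun r => v r 0) (wt m) s ^ 2 + dilAvg (fun r => v r 1) (wt m) s ^ 2) *
          dilAvg (fun r => v r 2) (fun ρ => h1f m ρ * wt m ρ) s -
        (dilAvg (fun r => v r 0) (wt m) s *
            dilAvg (fun r => v r 0) (fun ρ => h3f m ρ * wt m ρ) s +
          dilAvg (fun r => v r 1) (wt m) s *
            dilAvg (fun r => v r 1) (fun ρ => h3f m ρ * wt m ρ) s) with hG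
  have hcont : ContinuousOn G (Ioi 0) := by
    have b1 : ∀ r, 0 < r → |h1f m r| ≤ 1 := fun r hr => abs_h1f_le_one m hr
    have b3 : ∀ r, 0 < r → |h3f m r| ≤ 1 := fun r hr => abs_h3f_le_one m hr
    have hw := integrableOn_wt hm
    have i1 := integrableOn_mul_wt hm (continuousOn_h1f m) b1
    have i3 := integrableOn_mul_wt hm (continuousOn_h3f m) b3
    have k : ∀ (i : Fin 3) {g : ℝ → ℝ}, IntegrableOn g (Ioi 0) →
        ContinuousOn (dilAvg (fun r => v r i) g) (Ioi 0) := fun i g hg =>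
      continuousOn_dilAvg (h.isLocAC i).continuousOn (fun r hr => h.abs_apply_le_one i hr) hg
    exact (((((k 0 hw).pow 2).add ((k 1 hw).pow 2)).sqrt).mul (k 2 i1)).sub
      (((k 0 hw).mul (k 0 i3)).add ((k 1 hw).mul (k 1 i3)))
  have est : ∀ s, 1 / 2 ≤ s → s ≤ 2 → (s - 1) ^ 2 = t ^ 2 → 0 ≤ (s - 1) * G s := by
    intro s h1 h2 hst
    have e1 := abs_le.1 (h.dilAvg_gap hm hη hd h1 h2).2.2
    have e2 := le_dilAvg_h1f hm h1 h2
    have e3 := le_mul_dilAvg_sub hm h1 h2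
    set f := dilAvg (h1f m) (wt m) s
    set D := dilAvg (h3f m) (fun ρ => h1f m ρ * wt m ρ) s -
        dilAvg (h1f m) (fun ρ => h3f m ρ * wt m ρ) s
    change -(6 * η * I ^ 2) ≤ G s - f * D ∧ G s - f * D ≤ 6 * η * I ^ 2 at e1
    rw [← hc] at e2 e3
    have e4 : c ^ 2 * (c ^ 3 / 2 * (s - 1) ^ 2) ≤ f * ((s - 1) * D) :=
      mul_le_mul e2 e3 (by positivity) ((sq_nonneg c).trans e2)
    have e5 : c ^ 2 * (c ^ 3 / 2 * (s - 1) ^ 2) = 6 * η * I ^ 2 * t := by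
      rw [hst]; linear_combination (η / 2 * t) * hKc + (c ^ 5 / 2 * t) * ht
    rcases sq_eq_sq_iff_eq_or_eq_neg.1 hst with hs | hs <;> rw [hs] at e4 e5 ⊢ <;> nlinarith
  rcases ht0.eq_or_lt with h0 | h0
  · have hη0 : 6 * η * I ^ 2 = 0 := by 
      linear_combination -(η / 2) * hKc - (c ^ 5 / 2) * h0 - (c ^ 5 / 2) * ht
    refine ⟨1, by simpa using ht0, ?_⟩
    have e1 := (h.dilAvg_gap hm hη hd (s := 1) (by norm_num) (by norm_num)).2.2
    have e2 : dilAvg (h3f m) (fun ρ => h1f m ρ * wt m ρ) 1 =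
        dilAvg (h1f m) (fun ρ => h3f m ρ * wt m ρ) 1 := by
      simp only [dilAvg, one_mul, mul_left_comm]
    rw [e2, sub_self, mul_zero, sub_zero, ← hI, hη0] at e1
    exact abs_nonpos_iff.1 e1
  · have hu := est (1 + t) (by linarith) (by linarith) (by ring)
    have hl := est (1 - t) (by linarith) (by linarith) (by ring)
    have hu' : 0 ≤ G (1 + t) := nonneg_of_mul_nonneg_right (by linarith) h0
    have hl' : G (1 - t) ≤ 0 := by nlinarith
    have hsub : Icc (1 - t) (1 + t) ⊆ Ioi 0 := fun x hx => by
      have := hx.1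
      exact lt_of_lt_of_le (by linarith) this
    obtain ⟨s, hs, hs0⟩ := intermediate_value_Icc (by linarith) (hcont.mono hsub) ⟨hl', hu'⟩
    exact ⟨s, abs_le.2 ⟨by linarith [hs.1], by linarith [hs.2]⟩, hs0⟩

theorem exists_orthogonal (h : InSigma m v dv) (hm : 3 ≤ m) {η : ℝ} (hη : 0 ≤ η)
    (hd : ∀ r, 0 < r → hdist m v r ≤ η ^ 2) (hK : scaleConst m * η ≤ 1 / 2)
    (hL : angleConst m * η ≤ 1) :
    ∃ s α : ℝ, |s - 1| ≤ scaleConst m * η ∧ |Real.sin α| ≤ angleConst m * η ∧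
      0 ≤ Real.cos α ∧
      ∫ ρ in Ioi (0:ℝ), tang m (rescale s α v) ρ * ((h1f m ρ * ρ : ℝ) : ℂ) = 0 := by
  obtain ⟨s, hs1, hG⟩ := h.exists_scale hm hη hd hK
  have hs2 := abs_le.1 hs1
  have hs : 0 < s := by linarith
  have hgap := h.dilAvg_gap hm hη hd (s := s) (by linarith) (by linarith)
  have hc0 : 0 < (1 / 4 : ℝ) ^ m := by positivity
  have e1 := abs_le.1 hgap.1
  have e2 := hgap.2.1
  have e3 := le_dilAvg_h1f hm (s := s) (by linarith) (by linarith)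
  have b3 : ∀ r, 0 < r → |h3f m r| ≤ 1 := fun r hr => abs_h3f_le_one m hr
  have hw := integrableOn_wt hm
  have i1 := integrableOn_mul_wt hm (continuousOn_h1f m) fun r hr => abs_h1f_le_one m hr
  have i3 := integrableOn_mul_wt hm (continuousOn_h3f m) b3
  have int : ∀ (i : Fin 3) {g : ℝ → ℝ}, IntegrableOn g (Ioi 0) →
      IntegrableOn (fun ρ => v (s * ρ) i * g ρ) (Ioi 0) := fun i g hg =>
    integrableOn_dilate (h.isLocAC i).continuousOn (fun r hr => h.abs_apply_le_one i hr) hg hs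
  set c : ℝ := (1 / 4 : ℝ) ^ m with hc
  set I := ∫ ρ in Ioi (0:ℝ), wt m ρ with hI
  set x := dilAvg (fun r => v r 0) (wt m) s with hx
  set y := dilAvg (fun r => v r 1) (wt m) s with hy
  have hLc : angleConst m * c ^ 2 = 2 * I := by
    rw [angleConst, ← hc, ← hI, div_mul_cancel₀ _ (by positivity)]
  have hx0 : c ^ 2 / 2 ≤ x := by
    nlinarith [sq_nonneg c, mul_le_mul_of_nonneg_right hL (sq_nonneg c)]
  obtain ⟨α, hcos, hsin⟩ := exists_polar x y
  set N := √(x ^ 2 + y ^ 2) with hN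
  have hNx : x ≤ N := Real.le_sqrt_of_sq_le (by nlinarith [sq_nonneg y])
  have hN0 : 0 < N := lt_of_lt_of_le (by positivity) (hx0.trans hNx)
  refine ⟨s, α, hs1, ?_, ?_, ?_⟩
  · have : N * |Real.sin α| = |y| := by rw [← hsin, abs_mul, abs_of_pos hN0]
    have h3 : c ^ 2 / 2 * |Real.sin α| ≤ c ^ 2 / 2 * (angleConst m * η) := by
      calc c ^ 2 / 2 * |Real.sin α| ≤ N * |Real.sin α| := by gcongr; linarith
        _ ≤ η * I := by rw [this]; exact e2
        _ = _ := by linear_combination -(η / 2) * hLc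
    exact le_of_mul_le_mul_left h3 (by positivity)
  · have : 0 < N * Real.cos α := by rw [hcos]; exact lt_of_lt_of_le (by positivity) hx0
    exact (pos_of_mul_pos_right this hN0.le).le
  · have hre : ∫ ρ in Ioi (0:ℝ), (-Real.sin α * (v (s * ρ) 0 * wt m ρ) +
        Real.cos α * (v (s * ρ) 1 * wt m ρ)) = 0 := by
      rw [integral_add ((int 0 hw).const_mul _) ((int 1 hw).const_mul _), integral_const_mul,
        integral_const_mul]
      change -Real.sin α * x + Real.cos α * y = 0
      rw [← hcos, ← hsin]; ring
    have him : ∫ ρ in Ioi (0:ℝ), (v (s * ρ) 2 * (h1f m ρ * wt m ρ) -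
        (Real.cos α * (v (s * ρ) 0 * (h3f m ρ * wt m ρ)) +
          Real.sin α * (v (s * ρ) 1 * (h3f m ρ * wt m ρ)))) = 0 := by
      have i03 : IntegrableOn (fun ρ => Real.cos α * (v (s * ρ) 0 * (h3f m ρ * wt m ρ)) +
          Real.sin α * (v (s * ρ) 1 * (h3f m ρ * wt m ρ))) (Ioi 0) :=
        ((int 0 i3).const_mul _).add ((int 1 i3).const_mul _)
      rw [integral_sub (int 2 i1) i03,
        integral_add ((int 0 i3).const_mul _) ((int 1 i3).const_mul _), integral_const_mul,
        integral_const_mul]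
      refine (mul_eq_zero.1 (?_ : N * _ = 0)).resolve_left hN0.ne'
      refine Eq.trans ?_ hG
      rw [← hcos, ← hsin]
      simp only [dilAvg]
      ring
    have hsplit : ∀ ρ, tang m (rescale s α v) ρ * ((h1f m ρ * ρ : ℝ) : ℂ) =
        ((-Real.sin α * (v (s * ρ) 0 * wt m ρ) + Real.cos α * (v (s * ρ) 1 * wt m ρ) : ℝ) : ℂ) +
        ((v (s * ρ) 2 * (h1f m ρ * wt m ρ) -
          (Real.cos α * (v (s * ρ) 0 * (h3f m ρ * wt m ρ)) +
          Real.sin α * (v (s * ρ) 1 * (h3f m ρ * wt m ρ))) : ℝ) : ℂ) * Complex.I := by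
      intro ρ
      rw [tang, rescale_apply_zero, rescale_apply_one, rescale_apply_two, wt]
      push_cast
      ring
    simp only [hsplit]
    rw [integral_add, integral_mul_const, integral_complex_ofReal, integral_complex_ofReal, hre,
      him]
    · simp
    · exact (((int 0 hw).const_mul _).add ((int 1 hw).const_mul _)).ofReal
    · exact (((int 2 i1).sub (((int 0 i3).const_mul _).add
        ((int 1 i3).const_mul _))).ofReal).mul_const _

end InSigma

theorem abs_pow_sub_one_le {s : ℝ} (h0 : 0 ≤ s) (h2 : s ≤ 2) (n : ℕ) :
    |s ^ n - 1| ≤ (2 ^ n - 1) * |s - 1| := by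
  induction n with
  | zero => simp
  | succ n ih =>
    calc |s ^ (n + 1) - 1| = |s * (s ^ n - 1) + (s - 1)| := by ring_nf
      _ ≤ s * |s ^ n - 1| + |s - 1| := by
        refine (abs_add_le _ _).trans ?_
        rw [abs_mul, abs_of_nonneg h0]
      _ ≤ 2 * ((2 ^ n - 1) * |s - 1|) + |s - 1| := by gcongr
      _ = (2 ^ (n + 1) - 1) * |s - 1| := by ring

theorem abs_h3f_le (m : ℕ) {s : ℝ} (h0 : 0 < s) (h2 : s ≤ 2) : |h3f m s| ≤ 4 ^ m * |s - 1| := by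
  have h := abs_pow_sub_one_le h0.le h2 (m * 2)
  rw [pow_mul, pow_mul'] at h
  have h4 : ((2:ℝ) ^ 2) ^ m = 4 ^ m := by norm_num
  rw [h4] at h
  have hp : 0 < (s ^ m) ^ 2 := pow_pos (pow_pos h0 m) 2
  rw [h3f_eq m h0, abs_div, abs_of_pos (show 0 < (s ^ m) ^ 2 + 1 by positivity)]
  calc |(s ^ m) ^ 2 - 1| / ((s ^ m) ^ 2 + 1) ≤ |(s ^ m) ^ 2 - 1| :=
        div_le_self (abs_nonneg _) (by linarith)
    _ ≤ 4 ^ m * |s - 1| := by nlinarith [abs_nonneg (s - 1)]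

/-- The constant controlling the value at `1` of the renormalized map. -/
def pinConst (m : ℕ) : ℝ := 2 + 4 ^ m * scaleConst m + angleConst m

theorem scaleConst_nonneg (m : ℕ) : 0 ≤ scaleConst m := by rw [scaleConst]; positivity

theorem angleConst_nonneg (m : ℕ) : 0 ≤ angleConst m := by
  have := integral_wt_nonneg m
  rw [angleConst]; positivity

namespace InSigma

variable {m : ℕ} {v dv : ℝ → V3}

theorem rescale_one_bounds (h : InSigma m v dv) {η : ℝ} (hη : 0 ≤ η)
    (hd : ∀ r, 0 < r → hdist m v r ≤ η ^ 2) (hK : scaleConst m * η ≤ 1 / 2)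
    {s α : ℝ} (hs1 : |s - 1| ≤ scaleConst m * η) (hsin : |Real.sin α| ≤ angleConst m * η)
    (hcos : 0 ≤ Real.cos α) :
    |rescale s α v 1 2| ≤ pinConst m * η ∧
      hdist m (rescale s α v) 1 ≤ 3 * pinConst m ^ 2 * η ^ 2 := by
  have hs2 := abs_le.1 hs1
  have hs : 0 < s := by linarith
  have h3 : |h3f m s| ≤ 4 ^ m * scaleConst m * η := by
    refine (abs_h3f_le m hs (by linarith)).trans ?_
    rw [mul_assoc]; gcongr
  have hsq := h1f_sq_add_h3f_sq m hs
  have h1p := h1f_pos m hs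
  have h1l := h1f_le_one m hs
  have h31 := abs_h3f_le_one m hs
  have h1 : |h1f m s - 1| ≤ 4 ^ m * scaleConst m * η := by
    rw [abs_sub_comm, abs_of_nonneg (by linarith)]
    nlinarith [sq_abs (h3f m s), abs_nonneg (h3f m s)]
  have hdd := hd s hs
  rw [h.hdist_eq hs] at hdd
  have d0 : |v s 0 - h1f m s| ≤ η :=
    abs_le_of_sq_le_sq (by nlinarith [sq_nonneg (v s 1), sq_nonneg (v s 2 - h3f m s)]) hη
  have d1 : |v s 1| ≤ η :=
    abs_le_of_sq_le_sq (by nlinarith [sq_nonneg (v s 0 - h1f m s), sq_nonneg (v s 2 - h3f m s)]) hη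
  have d2 : |v s 2 - h3f m s| ≤ η :=
    abs_le_of_sq_le_sq (by nlinarith [sq_nonneg (v s 1), sq_nonneg (v s 0 - h1f m s)]) hη
  have hc1 : |Real.cos α - 1| ≤ angleConst m * η := by
    rw [abs_sub_comm, abs_of_nonneg (by linarith [Real.cos_le_one α])]
    nlinarith [Real.sin_sq_add_cos_sq α, Real.cos_le_one α, sq_abs (Real.sin α),
      abs_nonneg (Real.sin α), Real.abs_sin_le_one α]
  have hb0 := h.abs_apply_le_one 0 hs
  have hle : ∀ a b c : ℝ, |a| ≤ b → |c| ≤ 1 → |a * c| ≤ b := fun a b c ha hc => by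
    rw [abs_mul]; nlinarith [abs_nonneg a, abs_nonneg c]
  have hQ : pinConst m * η =
      2 * η + 4 ^ m * scaleConst m * η + angleConst m * η := by rw [pinConst]; ring
  have hpos1 : 0 ≤ 4 ^ m * scaleConst m * η := (abs_nonneg _).trans h3
  have hpos2 : 0 ≤ angleConst m * η := (abs_nonneg _).trans hsin
  have u2 : |rescale s α v 1 2| ≤ pinConst m * η := by
    rw [rescale_apply_two, mul_one, hQ]
    have := abs_le.1 d2
    have := abs_le.1 h3
    rw [abs_le]; constructor <;> linarith
  have u1 : |rescale s α v 1 1| ≤ pinConst m * η := by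
    rw [rescale_apply_one, mul_one, hQ]
    have e1 := abs_le.1 (hle _ _ _ hsin hb0)
    have e2 := abs_le.1 (hle _ _ _ d1 (Real.abs_cos_le_one α))
    rw [abs_le]; constructor <;> linarith
  have u0 : |rescale s α v 1 0 - 1| ≤ pinConst m * η := by
    rw [rescale_apply_zero, mul_one, hQ]
    have e1 := abs_le.1 (hle _ _ _ d0 (Real.abs_cos_le_one α))
    have e2 := abs_le.1 (hle _ _ _ h1 (Real.abs_cos_le_one α))
    have e3 := abs_le.1 (hle _ _ _ d1 (Real.abs_sin_le_one α))
    have e4 := abs_le.1 hc1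
    rw [abs_le]; constructor <;> linarith
  refine ⟨u2, ?_⟩
  rw [(h.rescaled hs α).hdist_eq one_pos, h1f_one, h3f_one, sub_zero]
  have q : ∀ a : ℝ, |a| ≤ pinConst m * η → a ^ 2 ≤ pinConst m ^ 2 * η ^ 2 := fun a ha => by
    rw [← mul_pow]; exact sq_le_sq' (abs_le.1 ha).1 (abs_le.1 ha).2
  linarith [q _ u0, q _ u1, q _ u2]

end InSigma

theorem rescale_rescale (s s' α α' : ℝ) (v : ℝ → V3) :
    rescale s' α' (rescale s α v) = rescale (s * s') (α + α') v := by
  funext r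
  rw [rescale, rescale, rotZ_rotZ, rescale]
  congr 2 <;> ring

/-- The inverse of the smallness threshold for the square root of the energy excess. -/
def smallConst (m : ℕ) : ℝ :=
  1 + 2 * scaleConst m + angleConst m + 8 * m * pinConst m

theorem InSigma.exists_splitting {m : ℕ} {v dv : ℝ → V3} (h : InSigma m v dv) (hm : 3 ≤ m)
    (hE : smallConst m * √(8 * (energy m v dv / π - 4 * m)) ≤ 1) :
    ∃ s α : ℝ, ∃ z dz : ℝ → ℂ, 0 < s ∧ LocACC z dz ∧
      (∀ r ∈ Ioi (0:ℝ), v r = rotZ α (fun i =>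
        (1 + gamC z (r / s)) * hProf m (r / s) i + Vrho m (z (r / s)) (r / s) i)) ∧
      (∫ ρ in Ioi (0:ℝ), z ρ * ((h1f m ρ * ρ : ℝ) : ℂ)) = 0 ∧
      IntegrableOn (xDen z dz) (Ioi (0:ℝ)) ∧
      (∫ ρ in Ioi (0:ℝ), xDen z dz ρ) ≤
        ((10 * (m:ℝ) ^ 2 + 1) * (192 * pinConst m ^ 2 + 32) + 4) *
          (energy m v dv / π - 4 * m) := by
  have hm' : (3:ℝ) ≤ m := by exact_mod_cast hm
  have hε0 := h.excess_nonneg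
  set ε := energy m v dv / π - 4 * m with hε
  set η := √(8 * ε) with hη
  have hη0 : 0 ≤ η := Real.sqrt_nonneg _
  have hηsq : η ^ 2 = 8 * ε := Real.sq_sqrt (by linarith)
  have k0 := mul_nonneg (scaleConst_nonneg m) hη0
  have k1 := mul_nonneg (angleConst_nonneg m) hη0
  have hpin : 0 ≤ pinConst m := by
    have := scaleConst_nonneg m
    have := angleConst_nonneg m
    rw [pinConst]; positivity
  have k2 := mul_nonneg hpin hη0
  have k3 : 0 ≤ 8 * m * (pinConst m * η) := by positivity
  have hsmall : smallConst m * η =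
      η + 2 * (scaleConst m * η) + angleConst m * η + 8 * m * (pinConst m * η) := by
    rw [smallConst]; ring
  rw [hsmall] at hE
  have hη1 : η ≤ 1 := by linarith
  have hε1 : ε ≤ 1 / 2 := by nlinarith
  have hp1 : pinConst m * η ≤ 1 / (8 * m) := by
    rw [le_div_iff₀ (by positivity)]; linarith
  have hp2 : pinConst m * η ≤ 1 / 24 := hp1.trans (by
    rw [div_le_div_iff₀ (by positivity) (by norm_num)]; linarith)
  obtain ⟨s₀, α₀, hs₀, w0, w1, w2⟩ := h.exists_rescale_one
  have hw := h.rescaled hs₀ α₀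
  have hwE : energy m (rescale s₀ α₀ v) (drescale s₀ α₀ dv) / π - 4 * m = ε := by
    rw [energy_rescale m hs₀]
  have hw1 : hdist m (rescale s₀ α₀ v) 1 = 0 := by
    rw [hw.hdist_eq one_pos, w0, w1, w2, h1f_one, h3f_one]; norm_num
  have hd : ∀ r, 0 < r → hdist m (rescale s₀ α₀ v) r ≤ η ^ 2 := by
    intro r hr
    have := hw.hdist_le (by omega) (by rw [w2, abs_zero]; positivity) (by rw [hwE]; exact hε1) hr
    rw [hwE, hw1] at this
    linarith
  obtain ⟨s, α, hs1, hsin, hcos, horth⟩ :=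
    hw.exists_orthogonal hm hη0 hd (by linarith) (by linarith)
  have hs : 0 < s := by linarith [(abs_le.1 hs1).1]
  obtain ⟨hu2, hu1⟩ := hw.rescale_one_bounds hη0 hd (by linarith) hs1 hsin hcos
  have hu := hw.rescaled hs α
  have huE : energy m (rescale s α (rescale s₀ α₀ v)) (drescale s α (drescale s₀ α₀ dv)) / π -
      4 * m = ε := by rw [energy_rescale m hs, hwE]
  have hud : ∀ r, 0 < r → hdist m (rescale s α (rescale s₀ α₀ v)) r ≤ 2 := by
    intro r hr
    have := hu.hdist_le (by omega) (hu2.trans hp1) (by rw [huE]; exact hε1) hr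
    rw [huE] at this
    nlinarith
  obtain ⟨hint, hbd⟩ := hu.xDen_bound (by omega) (hu2.trans hp1) (by rw [huE]; exact hε1) hud
  refine ⟨s₀ * s, α₀ + α, _, _, mul_pos hs₀ hs, hu.locACC_tang, fun r hr => ?_, horth, hint, ?_⟩
  · have hr' : 0 < r / (s₀ * s) := div_pos hr (mul_pos hs₀ hs)
    rw [← hu.splitting hr' (hud _ hr'), rescale_rescale]
    exact eq_rotZ_rescale (mul_pos hs₀ hs) _ v r
  · rw [huE] at hbd
    refine hbd.trans ?_
    rw [hηsq] at hu1
    have : (10 * (m:ℝ) ^ 2 + 1) * (8 * hdist m (rescale s α (rescale s₀ α₀ v)) 1) ≤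
        (10 * (m:ℝ) ^ 2 + 1) * (8 * (3 * pinConst m ^ 2 * (8 * ε))) := by gcongr
    linarith

/-- **Splitting lemma.** For m ≥ 3 and δ sufficiently small, every u ∈ Σ_m with
E(u) ≤ 4πm + δ² can be written as
u = e^{(mθ+α)R}[ (1 + γ(r/s)) h(r/s) + V^{r/s}(z(r/s)) ], γ = (1−|z|²)^{1/2} − 1,
with z satisfying the orthogonality condition ∫ z h₁ ρ dρ = 0 and
‖z‖_X² ≤ C (E(u) − 4πm). -/
theorem statement16 (m : ℕ) (hm : 3 ≤ m) :
    ∃ δ > (0:ℝ), ∃ C > (0:ℝ), ∀ v dv : ℝ → V3,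
      InSigma m v dv →
      energy m v dv ≤ 4 * π * m + δ ^ 2 →
      ∃ s α : ℝ, ∃ z dz : ℝ → ℂ,
        0 < s ∧
        LocACC z dz ∧
        -- the splitting of the map
        (∀ r ∈ Ioi (0:ℝ),
          v r = rotZ α (fun i =>
            (1 + gamC z (r / s)) * hProf m (r / s) i + Vrho m (z (r / s)) (r / s) i)) ∧
        -- orthogonality condition
        (∫ ρ in Ioi (0:ℝ), z ρ * ((h1f m ρ * ρ : ℝ) : ℂ)) = 0 ∧
        -- smallness of the X-norm
        IntegrableOn (xDen z dz) (Ioi (0:ℝ)) ∧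
        (∫ ρ in Ioi (0:ℝ), xDen z dz ρ) ≤ C * (energy m v dv - 4 * π * m) := by
  have hT : 0 < smallConst m := by
    have := scaleConst_nonneg m
    have := angleConst_nonneg m
    rw [smallConst, pinConst]; positivity
  refine ⟨1 / (2 * smallConst m), by positivity,
    ((10 * (m:ℝ) ^ 2 + 1) * (192 * pinConst m ^ 2 + 32) + 4) / π, by positivity,
    fun v dv h hE => ?_⟩
  have hπ := Real.pi_pos
  have hex : energy m v dv / π - 4 * m = (energy m v dv - 4 * π * m) / π := by
    field_simp
  have hsm : smallConst m * √(8 * (energy m v dv / π - 4 * m)) ≤ 1 := by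
    rw [← le_div_iff₀' hT]
    refine Real.sqrt_le_iff.2 ⟨by positivity, ?_⟩
    have h1 : (energy m v dv - 4 * π * m) / π ≤ (1 / (2 * smallConst m)) ^ 2 / 2 := by
      rw [div_le_iff₀ hπ]
      nlinarith [Real.two_le_pi, sq_nonneg (1 / (2 * smallConst m))]
    rw [hex]
    refine (mul_le_mul_of_nonneg_left h1 (by norm_num)).trans (le_of_eq ?_)
    field_simp
    norm_num
  have := h.exists_splitting hm hsm
  rwa [hex, ← mul_div_assoc, mul_div_right_comm] at this

end
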